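/- For each n ∈ {24, 56}, there exists a 7-connected maximal 1-plane graph G on n vertices whose underlying graph has crossing number cr(G) = 3n/4. (Consequently, the lower bound cr(G) ≥ 3n/4 for 7-connected maximal 1-plane graphs is tight for n = 24 and n = 56.) -/

import Mathlib

open Set

/-- A drawing of a simple graph in the plane: each vertex is assigned a distinct point,
and each edge a continuous arc (an injective continuous curve) joining its endpoints. -/
structure Drawing {V : Type} (G : SimpleGraph V) where
  pos : V → ℝ × ℝ
  pos_inj : Function.Injective pos
  arc : ∀ ⦃u v : V⦄, G.Adj u v → Set (ℝ × ℝ)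
  arc_symm : ∀ ⦃u v : V⦄ (h : G.Adj u v), arc h.symm = arc h
  arc_isArc : ∀ ⦃u v : V⦄ (h : G.Adj u v), ∃ γ : ℝ → ℝ × ℝ,
    ContinuousOn γ (Set.Icc 0 1) ∧ Set.InjOn γ (Set.Icc 0 1) ∧
    γ 0 = pos u ∧ γ 1 = pos v ∧ arc h = γ '' Set.Icc (0 : ℝ) 1

namespace Drawing

variable {V : Type} {G : SimpleGraph V} (D : Drawing G)

/-- The interior of the arc of an edge (the arc minus its endpoints). -/
def arcInt ⦃u v : V⦄ (h : G.Adj u v) : Set (ℝ × ℝ) :=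
  D.arc h \ {D.pos u, D.pos v}

/-- The interior of the drawing of an abstract edge `e : Sym2 V`. -/
def edgeInt (e : Sym2 V) : Set (ℝ × ℝ) :=
  {p | ∃ (u v : V) (h : G.Adj u v), e = s(u, v) ∧ p ∈ D.arcInt h}

/-- Two edges cross if they are distinct and their interiors meet. -/
def Cross (e f : Sym2 V) : Prop :=
  e ≠ f ∧ (D.edgeInt e ∩ D.edgeInt f).Nonempty

/-- The set of crossing points of the drawing. -/
def crossingSet : Set (ℝ × ℝ) :=
  {p | ∃ e f : Sym2 V, e ≠ f ∧ p ∈ D.edgeInt e ∧ p ∈ D.edgeInt f}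

/-- A good drawing: no vertex lies on the arc of a non-incident edge, any two distinct
edges meet in at most one interior point, and edges sharing an endpoint do not cross. -/
def IsGood : Prop :=
  (∀ (w : V) ⦃u v : V⦄ (h : G.Adj u v), D.pos w ∈ D.arc h → w = u ∨ w = v) ∧
  (∀ e f : Sym2 V, e ≠ f → (D.edgeInt e ∩ D.edgeInt f).Subsingleton) ∧
  (∀ ⦃u v w : V⦄ (h₁ : G.Adj u v) (h₂ : G.Adj u w), v ≠ w →
    D.arcInt h₁ ∩ D.arcInt h₂ = ∅)

/-- A drawing is 1-planar if every edge is crossed at most once. -/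
def IsOnePlanar : Prop :=
  ∀ e : Sym2 V, {f : Sym2 V | D.Cross e f}.Subsingleton

/-- The number of crossings of the drawing (each unordered pair of crossing edges
contributes one crossing). -/
noncomputable def crNum : ℕ :=
  Set.ncard {p : Sym2 V × Sym2 V | D.Cross p.1 p.2} / 2

/-- The subset of the plane covered by the drawing. -/
def drawingSet : Set (ℝ × ℝ) :=
  Set.range D.pos ∪ ⋃ (u : V) (v : V) (h : G.Adj u v), D.arc h

/-- A face of the drawing: a connected component of the complement of the drawing. -/
def IsFace (F : Set (ℝ × ℝ)) : Prop :=
  ∃ p ∉ D.drawingSet, F = connectedComponentIn D.drawingSetᶜ p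

/-- The set `∂(F)` of vertices on the boundary of a face `F`. -/
def faceVerts (F : Set (ℝ × ℝ)) : Set V :=
  {v | D.pos v ∈ frontier F}

/-- A true face of the planarization `G^×`: a face of the drawing whose boundary
contains no crossing point (i.e. it is incident with no fake vertex). -/
def IsTrueFace (F : Set (ℝ × ℝ)) : Prop :=
  D.IsFace F ∧ ∀ p ∈ D.crossingSet, p ∉ frontier F

/-- Two faces are adjacent if their boundaries share a common edge of the planarization,
i.e. they share a boundary point that is neither a vertex nor a crossing point. -/
def FaceAdj (F₁ F₂ : Set (ℝ × ℝ)) : Prop :=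
  F₁ ≠ F₂ ∧ ∃ p, p ∈ frontier F₁ ∧ p ∈ frontier F₂ ∧
    p ∉ Set.range D.pos ∧ p ∉ D.crossingSet

/-- The planarization `G^×` (crossings made into vertices of degree `4`) is a
triangulation: every face of the drawing has exactly three vertices of `G^×`
(true vertices or crossing points) on its boundary. -/
def PlanarizationIsTriangulation : Prop :=
  ∀ F : Set (ℝ × ℝ), D.IsFace F →
    ((Set.range D.pos ∪ D.crossingSet) ∩ frontier F).ncard = 3

/-- A maximal 1-plane graph: the drawing is good and 1-planar, and no edge between two
distinct non-adjacent vertices can be added to the drawing so that the result is still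
a good 1-planar drawing. -/
def IsMaximalOnePlane : Prop :=
  D.IsGood ∧ D.IsOnePlanar ∧
  ∀ u v : V, u ≠ v → ¬G.Adj u v →
    ∀ D' : Drawing (G ⊔ SimpleGraph.fromEdgeSet {s(u, v)}),
      D'.pos = D.pos →
      (∀ ⦃x y : V⦄ (h : G.Adj x y),
        D'.arc ((SimpleGraph.sup_adj _ _ _ _).mpr (Or.inl h)) = D.arc h) →
      ¬(D'.IsGood ∧ D'.IsOnePlanar)

/-- A maximal 1-plane graph is immovable if its number of crossings does not exceed that
of any good 1-planar drawing obtained from it by redrawing exactly one edge. -/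
def Immovable : Prop :=
  ∀ D' : Drawing G, D'.IsGood → D'.IsOnePlanar → D'.pos = D.pos →
    (∃ (u v : V) (_ : G.Adj u v), ∀ ⦃x y : V⦄ (h' : G.Adj x y),
      s(x, y) ≠ s(u, v) → D'.arc h' = D.arc h') →
    D.crNum ≤ D'.crNum

/-- The drawing induced on a subgraph. -/
def restrict {H : SimpleGraph V} (hle : H ≤ G) : Drawing H where
  pos := D.pos
  pos_inj := D.pos_inj
  arc := fun _ _ h => D.arc (hle h)
  arc_symm := fun _ _ h => D.arc_symm (hle h)
  arc_isArc := fun _ _ h => D.arc_isArc (hle h)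

/-- `H` is a planar skeleton `G_P` of the 1-plane graph `(G, D)`: it is obtained from `G`
by removing exactly one edge from each pair of crossing edges. -/
def IsPlanarSkeleton {H : SimpleGraph V} (_ : H ≤ G) : Prop :=
  (∀ e f : Sym2 V, D.Cross e f → (e ∈ H.edgeSet ↔ f ∉ H.edgeSet)) ∧
  ∀ e ∈ G.edgeSet, (¬∃ f, D.Cross e f) → e ∈ H.edgeSet

/-- `c_G(v)`: the number of crossing edges of the drawing incident with `v`. -/
noncomputable def cDeg (v : V) : ℕ :=
  Set.ncard {w : V | G.Adj v w ∧ ∃ f, D.Cross s(v, w) f}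

end Drawing

/-- The crossing number of a graph: the least number of crossings in a good drawing. -/
noncomputable def crossingNumber {V : Type} (G : SimpleGraph V) : ℕ :=
  sInf {n | ∃ D : Drawing G, D.IsGood ∧ D.crNum = n}

/-- A graph is `k`-connected if it stays connected after deleting any set of fewer than
`k` vertices. -/
def KConnected {V : Type} (G : SimpleGraph V) (k : ℕ) : Prop :=
  ∀ S : Set V, S.ncard < k → (G.induce Sᶜ).Connected

/-- A graph is 1-planar if it admits a good 1-planar drawing. -/
def Is1Planar {V : Type} (G : SimpleGraph V) : Prop :=
  ∃ D : Drawing G, D.IsGood ∧ D.IsOnePlanar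

/-- A maximal 1-planar graph: 1-planar, and adding any edge between distinct
non-adjacent vertices destroys 1-planarity. -/
def IsMaximal1Planar {V : Type} (G : SimpleGraph V) : Prop :=
  Is1Planar G ∧ ∀ u v : V, u ≠ v → ¬G.Adj u v →
    ¬Is1Planar (G ⊔ SimpleGraph.fromEdgeSet {s(u, v)})

/-! Upper bound: draw the cells of a straight-line triangulation, with both diagonals in some
convex quadrilaterals (the kites). Heights of the vertices for which every cell is a lower facet
certify that the cells do not overlap.

Maximality: a new edge that crosses nothing stays in one face, whose vertices are already pairwise
adjacent. Otherwise it crosses exactly one edge, itself uncrossed, and since a face inside a kite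
has no vertices besides the ends of its side, both sides of that edge must be triangles without a
diagonal. The triangulations are chosen so that no two such triangles share an edge.

Lower bound: removing one edge of each crossing pair from a good drawing leaves a planar graph, so
there are at least `|E| - (3|V| - 6)` crossings, and this is the number of kites. The bound
`3|V| - 6` comes from Mader's contraction argument for graphs without a `K₅` minor; `K₅` itself is
excluded by a parity count of winding numbers.

Connectivity: every vertex but the first seven has seven paths to smaller vertices that are disjoint
apart from their start, so after deleting fewer than seven vertices it still reaches a smaller one.
By descent it reaches one of the first seven, and these are linked to each other directly. -/

section LogVariation

/-- The change of a continuous logarithm of `γ` as its argument runs from `0` to `1`; only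
meaningful for a continuous curve avoiding `0`. -/
noncomputable def logVariation (γ : ℝ → ℂ) : ℂ :=
  open Classical in
  if h : ∃ L : ℝ → ℂ, Continuous L ∧ ∀ t, Complex.exp (L t) = γ t then
    h.choose 1 - h.choose 0
  else 0

theorem exists_continuous_log {X : Type*} [TopologicalSpace X] [SimplyConnectedSpace X]
    [LocallyPathConnectedSpace X] {F : X → ℂ} (hF : Continuous F) (hF₀ : ∀ x, F x ≠ 0) :
    ∃ L : X → ℂ, Continuous L ∧ ∀ x, Complex.exp (L x) = F x := by
  obtain ⟨x₀⟩ : Nonempty X := inferInstance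
  obtain ⟨L, ⟨-, hL⟩, -⟩ := Complex.isCoveringMapOn_exp.existsUnique_continuousMap_lifts
    ⟨F, hF⟩ (a₀ := x₀) (Complex.exp_log (hF₀ x₀)) hF₀
  exact ⟨L, L.continuous, congrFun hL⟩

theorem sub_eq_sub_of_exp_eq_exp {X : Type*} [TopologicalSpace X] [PreconnectedSpace X]
    {f g : X → ℂ} (hf : Continuous f) (hg : Continuous g)
    (h : ∀ x, Complex.exp (f x) = Complex.exp (g x)) (x y : X) : f x - f y = g x - g y := by
  obtain ⟨n, hn⟩ := Complex.exp_eq_exp_iff_exists_int.1 (h y)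
  have hcomp : (fun x => f x - n * (2 * Real.pi * Complex.I)) = g :=
    Complex.isCoveringMap_exp.eq_of_comp_eq (by fun_prop) hg
      (funext fun x => Subtype.ext (by
        simpa [Complex.exp_sub, Complex.exp_int_mul_two_pi_mul_I] using h x))
      y (by rw [hn]; ring)
  rw [← hcomp]
  ring

theorem logVariation_eq {γ L : ℝ → ℂ} {c : ℂ} (hc : c ≠ 0) (hL : Continuous L)
    (h : ∀ t, Complex.exp (L t) = c * γ t) : logVariation γ = L 1 - L 0 := by
  have hγ : ∃ L : ℝ → ℂ, Continuous L ∧ ∀ t, Complex.exp (L t) = γ t :=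
    ⟨fun t => L t - Complex.log c, by fun_prop, fun t => by
      rw [Complex.exp_sub, Complex.exp_log hc, h, mul_div_cancel_left₀ _ hc]⟩
  rw [logVariation, dif_pos hγ]
  have key := sub_eq_sub_of_exp_eq_exp (g := fun t => L t - Complex.log c) hγ.choose_spec.1
    (by fun_prop) (fun t => by
      rw [hγ.choose_spec.2, Complex.exp_sub, Complex.exp_log hc, h, mul_div_cancel_left₀ _ hc]) 1 0
  rw [key]
  ring

theorem exp_logVariation {γ : ℝ → ℂ} (hγ : Continuous γ) (hγ₀ : ∀ t, γ t ≠ 0) :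
    Complex.exp (logVariation γ) = γ 1 / γ 0 := by
  obtain ⟨L, hL, hexp⟩ := exists_continuous_log hγ hγ₀
  rw [logVariation_eq one_ne_zero hL (by simpa using hexp), Complex.exp_sub, hexp, hexp]

/-- A logarithm of `α s - β t` on the whole square returns to its value after one round trip along
the boundary. -/
theorem logVariation_sub_add_logVariation_sub {α β : ℝ → ℂ} (hα : Continuous α)
    (hβ : Continuous β) (h : ∀ s t, α s ≠ β t) :
    logVariation (fun s => α s - β 0) + logVariation (fun t => β t - α 1) =
      logVariation (fun t => β t - α 0) + logVariation (fun s => α s - β 1) := by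
  obtain ⟨L, hL, hexp⟩ := exists_continuous_log (F := fun x : ℝ × ℝ => α x.1 - β x.2)
    (by fun_prop) fun x => sub_ne_zero.2 (h x.1 x.2)
  have hα' (t : ℝ) : logVariation (fun s => α s - β t) = L (1, t) - L (0, t) :=
    logVariation_eq (L := fun s => L (s, t)) one_ne_zero (by fun_prop) fun s => by simp [hexp]
  have hβ' (s : ℝ) : logVariation (fun t => β t - α s) = L (s, 1) - L (s, 0) :=
    logVariation_eq (L := fun t => L (s, t)) (neg_ne_zero.2 one_ne_zero) (by fun_prop)
      fun t => by simp [hexp]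
  rw [hα', hα', hβ', hβ']
  ring

end LogVariation

section CompleteGraphFive

variable {p : Fin 5 → ℂ} {γ : Fin 5 → Fin 5 → ℝ → ℂ}

/-- Logarithms of the differences `p i - p k`, chosen so that exchanging the indices changes them
by a half turn whose direction depends only on the order of `i` and `k`. -/
noncomputable def logDiff {ι : Type*} [LinearOrder ι] (p : ι → ℂ) (i k : ι) : ℂ :=
  if i < k then Complex.log (p i - p k) else Complex.log (p k - p i) + Real.pi * Complex.I

theorem exp_logDiff {ι : Type*} [LinearOrder ι] {p : ι → ℂ} {i k : ι} (h : p i ≠ p k) :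
    Complex.exp (logDiff p i k) = p i - p k := by
  unfold logDiff
  split_ifs
  · exact Complex.exp_log (sub_ne_zero.2 h)
  · rw [Complex.exp_add, Complex.exp_log (sub_ne_zero.2 h.symm), Complex.exp_pi_mul_I]
    ring

theorem logDiff_sub_logDiff_swap {ι : Type*} [LinearOrder ι] (p : ι → ℂ) {i k : ι} (h : i ≠ k) :
    logDiff p i k - logDiff p k i = (if i < k then -1 else 1 : ℤ) * (Real.pi * Complex.I) := by
  unfold logDiff
  rcases lt_or_gt_of_ne h with h | h <;> simp [h, h.not_gt]

theorem exists_logVariation_sub_eq {ι : Type*} [LinearOrder ι] {p : ι → ℂ} {i j k : ι} {γ : ℝ → ℂ}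
    (hγ : Continuous γ) (hγ₀ : γ 0 = p i) (hγ₁ : γ 1 = p j) (hk : ∀ s, γ s ≠ p k) :
    ∃ n : ℤ, logVariation (fun s => γ s - p k) =
      logDiff p j k - logDiff p i k + n * (2 * Real.pi * Complex.I) := by
  refine Complex.exp_eq_exp_iff_exists_int.1 ?_
  rw [exp_logVariation (by fun_prop) fun s => sub_ne_zero.2 (hk s), Complex.exp_sub,
    exp_logDiff (hγ₁ ▸ hk 1), exp_logDiff (hγ₀ ▸ hk 0), hγ₀, hγ₁]

/-- The parity obstruction: in the relations of `logVariation_sub_add_logVariation_sub`, taken over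
the fifteen pairs of disjoint edges of the complete graph on five vertices, every winding number
occurs exactly twice, whereas the half turns add up to an odd number of full turns. -/
theorem not_forall_half_turns_eq (N : Fin 5 → Fin 5 → Fin 5 → ℤ) :
    ¬ ∀ i j k l : Fin 5, [i, j, k, l].Nodup →
      ((if j < k then -1 else 1) - (if i < k then -1 else 1) + (if l < j then -1 else 1) -
        (if l < i then -1 else 1) : ℤ) = 2 * (N k l i + N i j l - N i j k - N k l j) := by
  intro h
  have h₁ := h 0 1 2 3 (by decide)
  have h₂ := h 0 2 1 3 (by decide)
  have h₃ := h 0 3 1 2 (by decide)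
  have h₄ := h 0 1 2 4 (by decide)
  have h₅ := h 0 2 1 4 (by decide)
  have h₆ := h 0 4 1 2 (by decide)
  have h₇ := h 0 1 3 4 (by decide)
  have h₈ := h 0 3 1 4 (by decide)
  have h₉ := h 0 4 1 3 (by decide)
  have h₁₀ := h 0 2 3 4 (by decide)
  have h₁₁ := h 0 3 2 4 (by decide)
  have h₁₂ := h 0 4 2 3 (by decide)
  have h₁₃ := h 1 2 3 4 (by decide)
  have h₁₄ := h 1 3 2 4 (by decide)
  have h₁₅ := h 1 4 2 3 (by decide)
  simp only [Fin.reduceLT, if_true, if_false] at *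
  omega

theorem exists_curves_meet (hγ : ∀ i j, Continuous (γ i j)) (hγ₀ : ∀ i j, γ i j 0 = p i)
    (hγ₁ : ∀ i j, γ i j 1 = p j) :
    ∃ i j k l, [i, j, k, l].Nodup ∧ ∃ s t, γ i j s = γ k l t := by
  by_contra! hdisj
  have hcurve {i j k : Fin 5} (h : [i, j, k].Nodup) (s : ℝ) : γ i j s ≠ p k := by
    obtain ⟨l, hl⟩ : ∃ l, [i, j, k, l].Nodup := by revert i j k; decide
    simpa only [hγ₀] using hdisj i j k l hl s 0
  have hwinding (i j k : Fin 5) : ∃ n : ℤ, [i, j, k].Nodup →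
      logVariation (fun s => γ i j s - p k) =
        logDiff p j k - logDiff p i k + n * (2 * Real.pi * Complex.I) := by
    by_cases h : [i, j, k].Nodup
    · obtain ⟨n, hn⟩ := exists_logVariation_sub_eq (hγ i j) (hγ₀ i j) (hγ₁ i j) (hcurve h)
      exact ⟨n, fun _ => hn⟩
    · exact ⟨0, fun h' => absurd h' h⟩
  choose N hN using hwinding
  refine not_forall_half_turns_eq N fun i j k l h => ?_
  obtain ⟨⟨hijk, hijl, hkli, hklj⟩, hik, hil, hjk, hjl⟩ :
      ([i, j, k].Nodup ∧ [i, j, l].Nodup ∧ [k, l, i].Nodup ∧ [k, l, j].Nodup) ∧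
        i ≠ k ∧ i ≠ l ∧ j ≠ k ∧ j ≠ l := by
    revert h; revert i j k l; decide
  have hsquare := logVariation_sub_add_logVariation_sub (hγ i j) (hγ k l) (hdisj i j k l h)
  simp only [hγ₀, hγ₁] at hsquare
  rw [hN i j k hijk, hN k l j hklj, hN k l i hkli, hN i j l hijl] at hsquare
  have hjk' := logDiff_sub_logDiff_swap p hjk
  have hik' := logDiff_sub_logDiff_swap p hik
  have hlj' := logDiff_sub_logDiff_swap p hjl.symm
  have hli' := logDiff_sub_logDiff_swap p hil.symm
  have hπ : (Real.pi * Complex.I : ℂ) ≠ 0 := by simp [Real.pi_ne_zero]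
  refine Int.cast_injective (α := ℂ) (mul_right_cancel₀ hπ ?_)
  push_cast at hjk' hik' hlj' hli' ⊢
  linear_combination hsquare - hjk' + hik' - hlj' + hli'

end CompleteGraphFive

section LooselyEmbedded

variable {V X : Type*} [TopologicalSpace X] {G H : SimpleGraph V} {x y : V}

/-- A weakening of planarity that survives edge contractions: vertices are points and edges are
path-connected sets through their ends, and only edges without a common end must be disjoint. -/
def LooselyEmbeds (G : SimpleGraph V) (X : Type*) [TopologicalSpace X] : Prop :=
  ∃ (p : V → X) (E : Sym2 V → Set X),
    (∀ e ∈ G.edgeSet, IsPathConnected (E e) ∧ ∀ v ∈ e, p v ∈ E e) ∧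
    ∀ e ∈ G.edgeSet, ∀ f ∈ G.edgeSet, (∀ v ∈ e, v ∉ f) → Disjoint (E e) (E f)

theorem LooselyEmbeds.mono (hHG : H ≤ G) (hG : LooselyEmbeds G X) : LooselyEmbeds H X := by
  obtain ⟨p, E, hE, hdisj⟩ := hG
  have hsub := SimpleGraph.edgeSet_mono hHG
  exact ⟨p, E, fun e he => hE e (hsub he), fun e he f hf => hdisj e (hsub he) f (hsub hf)⟩

open Classical in
/-- The map identifying the vertex `y` with `x`. -/
noncomputable def identify (x y v : V) : V := if v = y then x else v

/-- The graph in which the vertex `y` is identified with `x`; `y` becomes isolated. -/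
noncomputable def contraction (G : SimpleGraph V) (x y : V) : SimpleGraph V :=
  G.map (identify x y)

@[simp]
theorem identify_self (x y : V) : identify x y y = x := if_pos rfl

theorem identify_of_ne (x : V) {y v : V} (h : v ≠ y) : identify x y v = v :=
  if_neg h

theorem isPathConnected_biUnion_of_inter_nonempty {ι : Type*} {s : Set ι} {A : ι → Set X} {i₀ : ι}
    (hi₀ : i₀ ∈ s) (hA : ∀ i ∈ s, IsPathConnected (A i)) (h : ∀ i ∈ s, (A i₀ ∩ A i).Nonempty) :
    IsPathConnected (⋃ i ∈ s, A i) := by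
  have hsub {i : ι} (hi : i ∈ s) : A i ⊆ ⋃ i ∈ s, A i := subset_biUnion_of_mem hi
  obtain ⟨a, ha⟩ := (hA i₀ hi₀).nonempty
  refine ⟨a, hsub hi₀ ha, fun {b} hb => ?_⟩
  obtain ⟨i, hi, hbi⟩ := mem_iUnion₂.1 hb
  obtain ⟨c, hc₀, hc⟩ := h i hi
  exact (((hA i₀ hi₀).joinedIn a ha c hc₀).mono (hsub hi₀)).trans
    (((hA i hi).joinedIn c hc b hbi).mono (hsub hi))

/-- The edges of `G` whose ends are sent to ends of `e` when `y` is identified with `x`. For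
`x ∈ e` this includes the contracted edge `s(x, y)`, which ties the others together. -/
def contractPieces (G : SimpleGraph V) (x y : V) (e : Sym2 V) : Set (Sym2 V) :=
  {f ∈ G.edgeSet | ∀ v ∈ f, identify x y v ∈ e}

theorem mem_contractPieces_of_mem {e : Sym2 V} (hxy : G.Adj x y) (hx : x ∈ e) :
    s(x, y) ∈ contractPieces G x y e :=
  ⟨hxy, by simp [identify_of_ne x hxy.ne, hx]⟩

theorem exists_mem_of_mem_contractPieces {u v : V} {f : Sym2 V} (hx : x ∈ s(u, v))
    (hf : f ∈ contractPieces G x y s(u, v)) : ∃ c ∈ f, c ∈ s(x, y) := by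
  obtain ⟨hfG, hf⟩ := hf
  induction f with | _ c d
  have hcd : c ≠ d := SimpleGraph.Adj.ne hfG
  simp only [Sym2.mem_iff, forall_eq_or_imp, forall_eq, exists_eq_or_imp,
    exists_eq_left] at hf hx ⊢
  by_contra! h
  rw [identify_of_ne x h.1.2, identify_of_ne x h.2.2] at hf
  grind

theorem contractPieces_eq_singleton {a b : V} (hab : G.Adj a b)
    (hx : x ∉ s(identify x y a, identify x y b)) :
    contractPieces G x y s(identify x y a, identify x y b) = {s(a, b)} := by
  have hne {v : V} (hv : identify x y v ∈ s(identify x y a, identify x y b)) : v ≠ y := by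
    intro hvy
    rw [hvy, identify_self] at hv
    exact hx hv
  refine Subset.antisymm (fun f hf => ?_) (singleton_subset_iff.2 ⟨hab, by simp⟩)
  have hsub (v : V) (hv : v ∈ f) : v ∈ s(a, b) := by
    have h := hf.2 v hv
    rwa [identify_of_ne x (hne h), identify_of_ne x (hne (v := a) (by simp)),
      identify_of_ne x (hne (v := b) (by simp))] at h
  have hfG := hf.1
  induction f with | _ c d
  have hcd : c ≠ d := SimpleGraph.Adj.ne hfG
  simp only [Sym2.mem_iff, forall_eq_or_imp, forall_eq] at hsub
  rw [mem_singleton_iff, Sym2.eq_iff]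
  grind

theorem LooselyEmbeds.contract (hG : LooselyEmbeds G X) (hxy : G.Adj x y) :
    LooselyEmbeds (contraction G x y) X := by
  obtain ⟨p, E, hE, hdisj⟩ := hG
  refine ⟨p, fun e => ⋃ f ∈ contractPieces G x y e, E f, fun e he => ?_, fun e _ f _ hef => ?_⟩
  · induction e with | _ u v
    obtain ⟨-, a, b, hab, rfl, rfl⟩ := he
    have hab' : s(a, b) ∈ contractPieces G x y s(identify x y a, identify x y b) :=
      ⟨hab, by simp⟩
    refine ⟨?_, fun w hw => ?_⟩
    · by_cases hx : x ∈ s(identify x y a, identify x y b)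
      · refine isPathConnected_biUnion_of_inter_nonempty (mem_contractPieces_of_mem hxy hx)
          (fun f hf => (hE f hf.1).1) fun f hf => ?_
        obtain ⟨c, hcf, hc⟩ := exists_mem_of_mem_contractPieces hx hf
        exact ⟨p c, (hE _ hxy).2 c hc, (hE f hf.1).2 c hcf⟩
      · simpa only [contractPieces_eq_singleton hab hx, biUnion_singleton] using (hE _ hab).1
    · by_cases hwx : w = x
      · exact mem_biUnion (mem_contractPieces_of_mem hxy (hwx ▸ hw))
          ((hE _ hxy).2 w (by simp [hwx]))
      · refine mem_biUnion hab' ((hE _ hab).2 w ?_)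
        have hw {c : V} (hc : w = identify x y c) : w = c := by
          by_cases hcy : c = y
          · exact absurd (hc.trans (hcy ▸ identify_self x c)) hwx
          · rwa [identify_of_ne x hcy] at hc
        exact Sym2.mem_iff.2 ((Sym2.mem_iff.1 ‹_›).imp hw hw)
  · simp only [disjoint_iUnion_left, disjoint_iUnion_right]
    exact fun f' hf' e' he' =>
      hdisj e' he'.1 f' hf'.1 fun v hv hv' => hef _ (he'.2 v hv) (hf'.2 v hv')

theorem LooselyEmbeds.cliqueFree_five {φ : X → ℂ} (hφ : Continuous φ) (hinj : φ.Injective)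
    (hG : LooselyEmbeds G X) : G.CliqueFree 5 := by
  obtain ⟨p, E, hE, hdisj⟩ := hG
  rw [SimpleGraph.cliqueFree_iff]
  refine ⟨fun f => ?_⟩
  have hadj {i j : Fin 5} (h : i ≠ j) : s(f i, f j) ∈ G.edgeSet := f.toHom.map_adj h
  have hf {i j : Fin 5} : f i = f j ↔ i = j := f.injective.eq_iff
  have hjoined (i j : Fin 5) : ∃ γ : Path (p (f i)) (p (f j)),
      i ≠ j → ∀ t, γ t ∈ E s(f i, f j) := by
    by_cases hij : i = j
    · subst hij
      exact ⟨Path.refl _, fun h => absurd rfl h⟩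
    · obtain ⟨hpath, hends⟩ := hE _ (hadj hij)
      obtain ⟨γ, hγ⟩ := hpath.joinedIn _ (hends (f i) (by simp)) _ (hends (f j) (by simp))
      exact ⟨γ, fun _ => hγ⟩
  choose γ hγ using hjoined
  obtain ⟨i, j, k, l, hnd, s, t, hst⟩ := exists_curves_meet (p := fun i => φ (p (f i)))
    (γ := fun i j t => φ ((γ i j).extend t)) (fun i j => hφ.comp (γ i j).continuous_extend)
    (fun i j => by simp) (fun i j => by simp)
  simp only [List.nodup_cons, List.mem_cons, not_or, List.not_mem_nil, not_false_eq_true,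
    List.nodup_nil, and_true] at hnd
  obtain ⟨⟨hij, hik, hil⟩, ⟨hjk, hjl⟩, hkl⟩ := hnd
  refine disjoint_left.1 (hdisj _ (hadj hij) _ (hadj hkl) ?_) (hγ i j hij _)
    ((hinj hst).symm ▸ hγ k l hkl _)
  simp [hf, hik, hil, hjk, hjl]

end LooselyEmbedded

section Mader

variable {V : Type*} {G : SimpleGraph V} {P : SimpleGraph V → Prop} {a b p q r v x y : V}

theorem ncard_edgeSet_le_contraction [Finite V] (G : SimpleGraph V) (x y : V) :
    G.edgeSet.ncard ≤ (contraction G x y).edgeSet.ncard + (G.commonNeighbors x y).ncard + 1 := by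
  classical
  set lost : Set (Sym2 V) := insert s(x, y) ((fun z => s(y, z)) '' G.commonNeighbors x y)
  have hlost : lost.ncard ≤ (G.commonNeighbors x y).ncard + 1 :=
    (ncard_insert_le _ _).trans (Nat.add_le_add_right (ncard_image_le (toFinite _)) 1)
  have hmaps : MapsTo (Sym2.map (identify x y)) (G.edgeSet \ lost)
      (contraction G x y).edgeSet := by
    rintro ⟨a, b⟩ ⟨hab, hnot⟩
    refine ⟨?_, a, b, hab, rfl, rfl⟩
    have hne := SimpleGraph.Adj.ne hab
    change identify x y a ≠ identify x y b
    simp only [lost, mem_insert_iff, not_or, Sym2.eq_iff, identify] at hne hnot ⊢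
    grind
  have hinj : InjOn (Sym2.map (identify x y)) (G.edgeSet \ lost) := by
    rintro ⟨a, b⟩ ⟨hab, hnot⟩ ⟨c, d⟩ ⟨hcd, hnot'⟩ heq
    have hab' : G.Adj a b := hab
    have hcd' : G.Adj c d := hcd
    have hne := hab'.ne
    have hne' := hcd'.ne
    have := hab'.symm
    have := hcd'.symm
    simp only [lost, mem_insert_iff, not_or, mem_image, not_exists, not_and, Sym2.map_mk, identify,
      SimpleGraph.mem_commonNeighbors, Sym2.eq_iff] at hnot hnot' heq ⊢
    grind
  have hle := ncard_le_ncard_of_injOn _ hmaps hinj (toFinite _)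
  have hsplit := ncard_le_ncard_sdiff_add_ncard G.edgeSet lost (toFinite _)
  omega

/-- The properties of a minor-closed class of graphs without `K₅` from which Mader's bound on the
number of edges follows. -/
structure ExcludesK5Minor (P : SimpleGraph V → Prop) : Prop where
  mono : ∀ ⦃H G⦄, H ≤ G → P G → P H
  contract : ∀ ⦃G x y⦄, G.Adj x y → P G → P (contraction G x y)
  cliqueFree : ∀ ⦃G⦄, P G → G.CliqueFree 5

theorem contraction_adj_of_ne (h : G.Adj a b) (ha : a ≠ y) (hb : b ≠ y) :
    (contraction G x y).Adj a b :=
  ⟨h.ne, a, b, h, identify_of_ne x ha, identify_of_ne x hb⟩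

theorem contraction_adj_left (h : G.Adj y a) (ha : x ≠ a) : (contraction G x y).Adj x a :=
  ⟨ha, y, a, h, identify_self x y, identify_of_ne x h.ne'⟩

theorem support_contraction_subset (hxy : G.Adj x y) :
    (contraction G x y).support ⊆ G.support \ {y} := by
  rintro - ⟨-, -, c, d, hcd, rfl, -⟩
  by_cases hc : c = y
  · rw [hc, identify_self]
    exact ⟨⟨y, hxy⟩, hxy.ne⟩
  · rw [identify_of_ne x hc]
    exact ⟨⟨d, hcd⟩, hc⟩

theorem ExcludesK5Minor.not_adj_of_common_neighbors (hP : ExcludesK5Minor P) (hG : P G)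
    (hvp : v ≠ p) (hab : a ≠ b) (hpq : p ≠ q) (hpr : p ≠ r) (hpa : G.Adj p a) (hpb : G.Adj p b)
    (hv : G.Adj v a ∧ G.Adj v b ∧ G.Adj v q ∧ G.Adj v r)
    (hq : G.Adj q a ∧ G.Adj q b) (hr : G.Adj r a ∧ G.Adj r b) : ¬G.Adj q r := by
  classical
  intro hqr
  have hkeep {s t : V} (h : G.Adj s t) (hs : p ≠ s) (ht : p ≠ t) :
      (contraction G a p).Adj s t :=
    contraction_adj_of_ne h hs.symm ht.symm
  have hab' : (contraction G a p).Adj a b := contraction_adj_left hpb hab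
  have htri := SimpleGraph.is3Clique_triple_iff.2
    ⟨hab', hkeep hr.1.symm hpa.ne hpr, hkeep hr.2.symm hpb.ne hpr⟩
  refine hP.cliqueFree (hP.contract hpa.symm hG) _ ((htri.insert (a := q) ?_).insert (a := v) ?_)
  · simp only [Finset.mem_insert, Finset.mem_singleton, forall_eq_or_imp, forall_eq]
    exact ⟨hkeep hq.1 hpq hpa.ne, hkeep hq.2 hpq hpb.ne, hkeep hqr hpq hpr⟩
  · simp only [Finset.mem_insert, Finset.mem_singleton, forall_eq_or_imp, forall_eq]
    exact ⟨hkeep hv.2.2.1 hvp.symm hpq, hkeep hv.1 hvp.symm hpa.ne, hkeep hv.2.1 hvp.symm hpb.ne,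
      hkeep hv.2.2.2 hvp.symm hpr⟩

theorem commonNeighbors_subset_of_not_adj (hnab : ¬G.Adj a b) :
    G.commonNeighbors v a ⊆ G.neighborSet v \ {a, b} := fun _ ⟨hvz, haz⟩ =>
  ⟨hvz, by rintro (rfl | rfl) <;> [exact G.irrefl haz; exact hnab haz]⟩

theorem adj_of_three_le_ncard_commonNeighbors [Finite V] (hN : (G.neighborSet v).ncard ≤ 5)
    (hva : G.Adj v a) (hvb : G.Adj v b) (hvx : G.Adj v x) (hab : a ≠ b) (hnab : ¬G.Adj a b)
    (h : 3 ≤ (G.commonNeighbors v a).ncard) (hxa : x ≠ a) (hxb : x ≠ b) : G.Adj a x := by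
  have hsub : G.commonNeighbors v a ⊆ G.neighborSet v \ {a, b} :=
    commonNeighbors_subset_of_not_adj hnab
  have hcard : (G.neighborSet v \ {a, b}).ncard = (G.neighborSet v).ncard - 2 := by
    rw [ncard_sdiff (insert_subset (show a ∈ G.neighborSet v from hva)
      (singleton_subset_iff.2 (show b ∈ G.neighborSet v from hvb))), ncard_pair hab]
  have heq := eq_of_subset_of_ncard_le hsub (by omega)
  exact (heq.symm.subset ⟨hvx, by simp [hxa, hxb]⟩ : x ∈ G.commonNeighbors v a).2

theorem ExcludesK5Minor.exists_ncard_commonNeighbors_lt [Finite V] (hP : ExcludesK5Minor P)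
    (hG : P G) (hN : (G.neighborSet v).ncard ≤ 5) (hN' : 4 ≤ (G.neighborSet v).ncard) :
    ∃ w, G.Adj v w ∧ (G.commonNeighbors v w).ncard < 3 := by
  classical
  by_contra! h
  have hadj {a b x : V} (hva : G.Adj v a) (hvb : G.Adj v b) (hvx : G.Adj v x) (hab : a ≠ b)
      (hnab : ¬G.Adj a b) (hxa : x ≠ a) (hxb : x ≠ b) : G.Adj a x :=
    adj_of_three_le_ncard_commonNeighbors hN hva hvb hvx hab hnab (h a hva) hxa hxb
  by_cases hclique : G.IsClique (G.neighborSet v)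
  · obtain ⟨T, hTN, hT⟩ := exists_subset_card_eq hN'
    lift T to Finset V using toFinite T
    rw [ncard_coe_finset] at hT
    exact hP.cliqueFree hG _ (SimpleGraph.IsNClique.insert ⟨hclique.subset hTN, hT⟩ hTN)
  · simp only [SimpleGraph.isClique_iff, Set.Pairwise, not_forall] at hclique
    obtain ⟨a, hva, b, hvb, hab, hnab⟩ := hclique
    have hrest {z : V} (hz : z ∈ G.neighborSet v \ {a, b}) :
        G.Adj v z ∧ G.Adj z a ∧ G.Adj z b := by
      simp only [mem_sdiff, mem_insert_iff, mem_singleton_iff, not_or] at hz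
      exact ⟨hz.1, (hadj hva hvb hz.1 hab hnab hz.2.1 hz.2.2).symm,
        (hadj hvb hva hz.1 hab.symm (mt .symm hnab) hz.2.2 hz.2.1).symm⟩
    have hnadj {p q r : V} (hp : p ∈ G.neighborSet v \ {a, b}) (hq : q ∈ G.neighborSet v \ {a, b})
        (hr : r ∈ G.neighborSet v \ {a, b}) (hpq : p ≠ q) (hpr : p ≠ r) : ¬G.Adj q r :=
      hP.not_adj_of_common_neighbors hG (hrest hp).1.ne hab hpq hpr (hrest hp).2.1 (hrest hp).2.2
        ⟨hva, hvb, (hrest hq).1, (hrest hr).1⟩ (hrest hq).2 (hrest hr).2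
    have hcard : 3 ≤ (G.neighborSet v \ {a, b}).ncard :=
      (h a hva).trans (ncard_le_ncard (commonNeighbors_subset_of_not_adj hnab))
    obtain ⟨p, hp, q, hq, r, hr, hpq, hpr, hqr⟩ := (two_lt_ncard (toFinite _)).1 hcard
    exact hnadj hr hq hp hqr.symm hpr.symm <|
      hadj (hrest hq).1 (hrest hr).1 (hrest hp).1 hqr (hnadj hp hq hr hpq hpr) hpq hpr

theorem exists_le_ncard_edgeSet_eq {m : ℕ} (h : m ≤ G.edgeSet.ncard) :
    ∃ H ≤ G, H.edgeSet.ncard = m := by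
  obtain ⟨s, hs, rfl⟩ := exists_subset_card_eq h
  refine ⟨SimpleGraph.fromEdgeSet s, ?_, ?_⟩
  · rw [SimpleGraph.fromEdgeSet_le]
    exact sdiff_subset.trans hs
  · rw [SimpleGraph.edgeSet_fromEdgeSet, sdiff_eq_left.2]
    exact disjoint_left.2 fun e he => G.not_isDiag_of_mem_edgeSet (hs he)

theorem ncard_edgeSet_le_choose_two [Finite V] {S : Set V} (hS : G.support ⊆ S) :
    G.edgeSet.ncard ≤ S.ncard.choose 2 := by
  classical
  have := Fintype.ofFinite V
  rw [← SimpleGraph.coe_edgeFinset, ncard_coe_finset,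
    ← SimpleGraph.card_edgeFinset_induce_of_support_subset hS, ← Nat.card_coe_set_eq,
    Nat.card_eq_fintype_card]
  exact SimpleGraph.card_edgeFinset_le_card_choose_two

theorem exists_ncard_neighborSet_lt [Finite V] {d : ℕ} {S : Set V}
    (h : 2 * G.edgeSet.ncard < d * S.ncard) : ∃ v ∈ S, (G.neighborSet v).ncard < d := by
  classical
  have := Fintype.ofFinite V
  by_contra! hall
  have hsum : d * S.toFinset.card ≤ ∑ v ∈ S.toFinset, G.degree v := by
    rw [mul_comm, ← smul_eq_mul]
    refine Finset.card_nsmul_le_sum _ _ _ fun v hv => ?_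
    rw [← SimpleGraph.card_neighborSet_eq_degree, ← Nat.card_eq_fintype_card, Nat.card_coe_set_eq]
    exact hall v (mem_toFinset.1 hv)
  have hle := hsum.trans (Finset.sum_le_sum_of_subset (Finset.subset_univ _))
  rw [G.sum_degrees_eq_twice_card_edges, ← ncard_eq_toFinset_card', ← ncard_coe_finset,
    SimpleGraph.coe_edgeFinset] at hle
  omega

theorem ExcludesK5Minor.ncard_edgeSet_add_six_le [Finite V] (hP : ExcludesK5Minor P) {k : ℕ}
    (hk : 4 ≤ k) (hG : P G) {S : Set V} (hS : G.support ⊆ S) (hcard : S.ncard = k) :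
    G.edgeSet.ncard + 6 ≤ 3 * k := by
  induction k, hk using Nat.le_induction generalizing G S with
  | base =>
    have h := ncard_edgeSet_le_choose_two hS
    rw [hcard, show Nat.choose 4 2 = 6 from rfl] at h
    omega
  | succ k hk ih =>
    by_contra! hlt
    obtain ⟨H, hHG, hH⟩ := exists_le_ncard_edgeSet_eq (G := G) (m := 3 * (k + 1) - 5) (by omega)
    have hPH := hP.mono hHG hG
    have hHS : H.support ⊆ S := (SimpleGraph.support_mono hHG).trans hS
    have hdel {y : V} (hy : y ∈ S) : (S \ {y}).ncard = k := by
      rw [ncard_sdiff_singleton_of_mem hy, hcard, Nat.add_sub_cancel]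
    have hcommon {x y : V} (hxy : H.Adj x y) : 3 ≤ (H.commonNeighbors x y).ncard := by
      have h := ncard_edgeSet_le_contraction H x y
      have h' := ih (hP.contract hxy hPH)
        ((support_contraction_subset hxy).trans (sdiff_subset_sdiff_left hHS))
        (hdel (hHS ⟨x, hxy.symm⟩))
      omega
    obtain ⟨v, hvS, hv⟩ := exists_ncard_neighborSet_lt (G := H) (d := 6) (S := S) (by omega)
    obtain hv₀ | ⟨w, hw⟩ := (H.neighborSet v).eq_empty_or_nonempty
    · have h := ih hPH (S := S \ {v})
        (fun u hu => ⟨hHS hu, by rintro rfl; obtain ⟨w, hw⟩ := hu; exact (hv₀.subset hw)⟩)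
        (hdel hvS)
      omega
    · have hN : H.commonNeighbors v w ⊆ H.neighborSet v \ {w} := fun z ⟨hvz, hwz⟩ =>
        ⟨hvz, hwz.ne'⟩
      have h := ncard_le_ncard hN
      rw [ncard_sdiff_singleton_of_mem hw] at h
      have := hcommon hw
      obtain ⟨u, hvu, hu⟩ := hP.exists_ncard_commonNeighbors_lt hPH (v := v) (by omega) (by omega)
      exact hu.not_ge (hcommon hvu)

theorem excludesK5Minor_looselyEmbeds {X : Type*} [TopologicalSpace X] {φ : X → ℂ}
    (hφ : Continuous φ) (hinj : φ.Injective) :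
    ExcludesK5Minor fun G : SimpleGraph V => LooselyEmbeds G X where
  mono _ _ := LooselyEmbeds.mono
  contract _ _ _ hxy hG := hG.contract hxy
  cliqueFree _ := LooselyEmbeds.cliqueFree_five hφ hinj

end Mader

namespace Drawing

variable {V : Type} {G : SimpleGraph V} (D : Drawing G) {e f : Sym2 V} {u v : V}

/-- The arc of an abstract edge `e : Sym2 V`, with its ends; empty unless `e` is an edge. -/
def edgeArc (e : Sym2 V) : Set (ℝ × ℝ) :=
  {p | ∃ (u v : V) (h : G.Adj u v), e = s(u, v) ∧ p ∈ D.arc h}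

/-- The graph on the edges of a drawn graph in which two edges are joined if they cross. -/
def crossingGraph : SimpleGraph (Sym2 V) where
  Adj := D.Cross
  symm := ⟨fun e _ h => ⟨h.1.symm, inter_comm (D.edgeInt e) _ ▸ h.2⟩⟩
  loopless := ⟨fun _ h => h.1 rfl⟩

theorem crNum_eq_ncard [Finite V] : D.crNum = D.crossingGraph.edgeSet.ncard := by
  classical
  have := Fintype.ofFinite V
  have hdarts : {p : Sym2 V × Sym2 V | D.Cross p.1 p.2}.ncard
      = Fintype.card D.crossingGraph.Dart := by
    rw [← Nat.card_coe_set_eq, ← Nat.card_eq_fintype_card]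
    exact Nat.card_congr
      ⟨fun p => ⟨p.1, p.2⟩, fun d => ⟨d.toProd, d.adj⟩, fun _ => rfl, fun _ => rfl⟩
  rw [crNum, hdarts, SimpleGraph.dart_card_eq_twice_card_edges, ← ncard_coe_finset,
    SimpleGraph.coe_edgeFinset, Nat.mul_div_cancel_left _ two_pos]

theorem exists_ncard_le_crNum_forall_cross [Finite V] :
    ∃ R : Set (Sym2 V), R.ncard ≤ D.crNum ∧ ∀ e f, D.Cross e f → e ∈ R ∨ f ∈ R := by
  refine ⟨(fun c => (Quot.out c).1) '' D.crossingGraph.edgeSet,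
    (ncard_image_le (toFinite _)).trans_eq D.crNum_eq_ncard.symm, fun e f h => ?_⟩
  exact (Sym2.mem_iff.1 (Sym2.out_fst_mem s(e, f))).imp
    (fun he => ⟨s(e, f), h, he⟩) (fun hf => ⟨s(e, f), h, hf⟩)

theorem edgeArc_mk (h : G.Adj u v) : D.edgeArc s(u, v) = D.arc h := by
  refine Subset.antisymm ?_ fun p hp => ⟨u, v, h, rfl, hp⟩
  rintro p ⟨a, b, hab, heq, hp⟩
  obtain ⟨rfl, rfl⟩ | ⟨rfl, rfl⟩ := Sym2.eq_iff.1 heq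
  · exact hp
  · rwa [← D.arc_symm]

theorem edgeInt_mk (h : G.Adj u v) : D.edgeInt s(u, v) = D.arcInt h := by
  refine Subset.antisymm ?_ fun p hp => ⟨u, v, h, rfl, hp⟩
  rintro p ⟨a, b, hab, heq, hp⟩
  obtain ⟨rfl, rfl⟩ | ⟨rfl, rfl⟩ := Sym2.eq_iff.1 heq
  · exact hp
  · rwa [arcInt, pair_comm, ← D.arc_symm]

theorem isPathConnected_arc (h : G.Adj u v) : IsPathConnected (D.arc h) := by
  obtain ⟨γ, hγ, -, -, -, heq⟩ := D.arc_isArc h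
  rw [heq]
  exact ((convex_Icc (0 : ℝ) 1).isPathConnected ⟨0, by simp⟩).image' hγ

theorem pos_left_mem_arc (h : G.Adj u v) : D.pos u ∈ D.arc h := by
  obtain ⟨γ, -, -, h₀, -, heq⟩ := D.arc_isArc h
  exact heq ▸ ⟨0, by simp, h₀⟩

theorem pos_mem_edgeArc (he : e ∈ G.edgeSet) (hv : v ∈ e) : D.pos v ∈ D.edgeArc e := by
  obtain ⟨u, rfl⟩ := Sym2.mem_iff_exists.1 hv
  exact ⟨v, u, he, rfl, D.pos_left_mem_arc he⟩

variable {D} in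
theorem IsGood.cross_of_not_disjoint_edgeArc (hD : D.IsGood) (hef : ∀ v ∈ e, v ∉ f)
    (hmeet : ¬Disjoint (D.edgeArc e) (D.edgeArc f)) : D.Cross e f := by
  obtain ⟨p, ⟨a, b, hab, rfl, hp⟩, ⟨c, d, hcd, rfl, hp'⟩⟩ := not_disjoint_iff.1 hmeet
  have harc {a b c d : V} (hab : G.Adj a b) (hcd : G.Adj c d) (hef : ∀ v ∈ s(a, b), v ∉ s(c, d))
      (hp : p ∈ D.arc hab) (hp' : p ∈ D.arc hcd) : p ∈ D.edgeInt s(a, b) := by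
    refine ⟨a, b, hab, rfl, hp, ?_⟩
    rintro (rfl | rfl)
    · exact hef a (by simp) (Sym2.mem_iff.2 (hD.1 _ hcd hp'))
    · exact hef b (by simp) (Sym2.mem_iff.2 (hD.1 _ hcd hp'))
  exact ⟨fun h => hef a (by simp) (h ▸ Sym2.mem_mk_left a b), p, harc hab hcd hef hp hp',
    harc hcd hab (fun v hv hv' => hef v hv' hv) hp' hp⟩

variable {D} in
theorem IsGood.looselyEmbeds_deleteEdges (hD : D.IsGood) {R : Set (Sym2 V)}
    (hR : ∀ e f, D.Cross e f → e ∈ R ∨ f ∈ R) : LooselyEmbeds (G.deleteEdges R) (ℝ × ℝ) := by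
  rw [LooselyEmbeds, SimpleGraph.edgeSet_deleteEdges]
  refine ⟨D.pos, D.edgeArc, fun e he => ⟨?_, fun v hv => D.pos_mem_edgeArc he.1 hv⟩,
    fun e he f hf hef => ?_⟩
  · induction e with | _ u v
    exact (D.edgeArc_mk he.1).symm ▸ D.isPathConnected_arc he.1
  · by_contra hmeet
    exact (hR e f (hD.cross_of_not_disjoint_edgeArc hef hmeet)).elim he.2 hf.2

variable {D} in
theorem IsGood.ncard_edgeSet_add_six_le [Finite V] (hV : 4 ≤ Nat.card V) (hD : D.IsGood) :
    G.edgeSet.ncard + 6 ≤ 3 * Nat.card V + D.crNum := by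
  obtain ⟨R, hRcard, hR⟩ := D.exists_ncard_le_crNum_forall_cross
  have hplanar := (excludesK5Minor_looselyEmbeds Complex.equivRealProdCLM.symm.continuous
    Complex.equivRealProdCLM.symm.injective).ncard_edgeSet_add_six_le hV
    (hD.looselyEmbeds_deleteEdges hR) (subset_univ _) (ncard_univ V)
  rw [SimpleGraph.edgeSet_deleteEdges] at hplanar
  have hsplit := ncard_le_ncard_sdiff_add_ncard G.edgeSet R (toFinite _)
  omega

end Drawing

section Fans

variable {V : Type} {G : SimpleGraph V} {k : ℕ} {u v : V} {S : Set V} {l : List V}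
  {ps : List (List V)} {T : V → Prop}

/-- Deleting fewer than `k` vertices other than `u` and `v` does not separate `u` from `v`. -/
def IsKLinked (G : SimpleGraph V) (k : ℕ) (u v : V) : Prop :=
  ∀ S : Set V, S.ncard < k → ∀ (hu : u ∈ Sᶜ) (hv : v ∈ Sᶜ),
    (G.induce Sᶜ).Reachable ⟨u, hu⟩ ⟨v, hv⟩

/-- The lists `ps` are disjoint paths from `v` to vertices with the property `T`. The vertex `v`
itself is left out of the lists, so `[]` is the trivial path at `v`. -/
def IsFan (G : SimpleGraph V) (v : V) (ps : List (List V)) (T : V → Prop) : Prop :=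
  ps.flatten.Nodup ∧ ∀ l ∈ ps, (v :: l).IsChain G.Adj ∧ T (l.getLastD v)

instance [DecidableEq V] [DecidableRel G.Adj] [DecidablePred T] : Decidable (IsFan G v ps T) :=
  inferInstanceAs (Decidable (_ ∧ _))

theorem IsKLinked.symm (h : IsKLinked G k u v) : IsKLinked G k v u :=
  fun S hS hv hu => (h S hS hu hv).symm

theorem IsKLinked.refl (G : SimpleGraph V) (k : ℕ) (v : V) : IsKLinked G k v v :=
  fun _ _ _ _ => .refl _

theorem isKLinked_of_adj (k : ℕ) (h : G.Adj u v) : IsKLinked G k u v := fun _ _ hu hv =>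
  SimpleGraph.Adj.reachable (G := G.induce _) (u := ⟨u, hu⟩) (v := ⟨v, hv⟩) h

theorem reachable_induce_of_isChain (h : (v :: l).IsChain G.Adj) (hv : v ∈ S)
    (hl : ∀ w ∈ l, w ∈ S) :
    ∃ hw : l.getLastD v ∈ S, (G.induce S).Reachable ⟨v, hv⟩ ⟨l.getLastD v, hw⟩ := by
  induction l generalizing v with
  | nil => exact ⟨hv, .refl _⟩
  | cons a l ih =>
    rw [List.isChain_cons_cons] at h
    rw [List.forall_mem_cons] at hl
    obtain ⟨hw, hreach⟩ := ih h.2 hl.1 hl.2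
    rw [List.getLastD_cons]
    have hadj : (G.induce S).Adj ⟨v, hv⟩ ⟨a, hl.1⟩ := h.1
    exact ⟨hw, hadj.reachable.trans hreach⟩

theorem exists_mem_forall_notMem_of_nodup_flatten (hps : ps.flatten.Nodup) (hfin : S.Finite)
    (hS : S.ncard < ps.length) : ∃ l ∈ ps, ∀ w ∈ l, w ∉ S := by
  induction ps generalizing S with
  | nil => exact absurd hS (Nat.not_lt_zero _)
  | cons l ps ih =>
    by_contra! h
    rw [List.forall_mem_cons] at h
    obtain ⟨⟨w, hwl, hwS⟩, h⟩ := h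
    rw [List.flatten_cons, List.nodup_append'] at hps
    rw [List.length_cons] at hS
    have hcard := ncard_sdiff_singleton_add_one hwS hfin
    obtain ⟨l', hl', hdisj⟩ := ih hps.2.1 (hfin.subset sdiff_subset) (S := S \ {w}) (by omega)
    obtain ⟨z, hzl', hzS⟩ := h l' hl'
    refine hdisj z hzl' ⟨hzS, ?_⟩
    rintro rfl
    exact hps.2.2 hwl (List.mem_flatten.2 ⟨l', hl', hzl'⟩)

theorem IsFan.exists_reachable [Finite V] (h : IsFan G v ps T) (hk : k ≤ ps.length)
    (hS : S.ncard < k) (hv : v ∈ Sᶜ) :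
    ∃ w, ∃ hw : w ∈ Sᶜ, T w ∧ (G.induce Sᶜ).Reachable ⟨v, hv⟩ ⟨w, hw⟩ := by
  obtain ⟨l, hl, hlS⟩ :=
    exists_mem_forall_notMem_of_nodup_flatten h.1 (toFinite S) (hS.trans_le hk)
  obtain ⟨hw, hreach⟩ := reachable_induce_of_isChain (h.2 l hl).1 hv hlS
  exact ⟨_, hw, (h.2 l hl).2, hreach⟩

theorem IsFan.isKLinked [Finite V] (h : IsFan G v ps (G.Adj u)) (hk : k ≤ ps.length) :
    IsKLinked G k v u := fun S hS hv hu => by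
  obtain ⟨w, hw, huw, hreach⟩ := h.exists_reachable hk hS hv
  exact hreach.trans ((isKLinked_of_adj k huw).symm S hS hw hu)

theorem kConnected_of_fans [Finite V] [LinearOrder V] {B : Set V} (hB : k ≤ B.ncard)
    (hlinked : ∀ u ∈ B, ∀ v ∈ B, v < u → IsKLinked G k u v)
    (hfan : ∀ v ∉ B, ∃ ps : List (List V), k ≤ ps.length ∧ IsFan G v ps (· < v)) :
    KConnected G k := fun S hS => by
  have hlinked' {u v : V} (hu : u ∈ B) (hv : v ∈ B) : IsKLinked G k u v := by
    obtain h | rfl | h := lt_trichotomy v u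
    · exact hlinked u hu v hv h
    · exact .refl G k v
    · exact (hlinked v hv u hu h).symm
  obtain ⟨b, hbB, hbS⟩ := exists_mem_notMem_of_ncard_lt_ncard (hS.trans_le hB)
  have hreach (v : V) : ∀ hv : v ∈ Sᶜ, (G.induce Sᶜ).Reachable ⟨v, hv⟩ ⟨b, hbS⟩ := by
    induction v using WellFoundedLT.induction with | _ v ih
    intro hv
    by_cases hvB : v ∈ B
    · exact hlinked' hvB hbB S hS hv hbS
    · obtain ⟨ps, hps, hpsfan⟩ := hfan v hvB
      obtain ⟨w, hw, hwv, hvw⟩ := hpsfan.exists_reachable hps hS hv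
      exact hvw.trans (ih w hwv hw)
  exact (SimpleGraph.connected_iff_exists_forall_reachable _).2
    ⟨⟨b, hbS⟩, fun v => (hreach v v.2).symm⟩

end Fans

section LowerFaces

variable {E V : Type*} [AddCommGroup E] [Module ℝ E] {p : V → E} {h : V → ℝ} {T T' U U' : Set V}
  {x : E}

theorem mem_convexHull_sep_eq_zero (f : E →ᵃ[ℝ] ℝ) {s : Set E} (hs : ∀ y ∈ s, 0 ≤ f y)
    (hx : x ∈ convexHull ℝ s) (hfx : f x ≤ 0) : x ∈ convexHull ℝ {y ∈ s | f y = 0} := by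
  suffices h : x ∈ {y | 0 < f y} ∪ convexHull ℝ {y ∈ s | f y = 0} from
    h.resolve_left hfx.not_gt
  refine convexHull_min (fun y hy => ?_) (convex_iff_openSegment_subset.2 ?_) hx
  · exact (hs y hy).lt_or_eq.imp id fun h0 => subset_convexHull ℝ _ ⟨hy, h0.symm⟩
  · have hzero : convexHull ℝ {y ∈ s | f y = 0} ⊆ {y | f y = 0} :=
      convexHull_min (fun y hy => hy.2) ((convex_singleton 0).affine_preimage f)
    rintro y hy z hz w ⟨a, b, ha, hb, hab, rfl⟩
    have hval : f (a • y + b • z) = a • f y + b • f z := Convex.combo_affine_apply hab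
    simp only [mem_union, mem_ofPred_eq, hval, smul_eq_mul]
    obtain hy | hy := hy <;> obtain hz | hz := hz
    · exact Or.inl (by simp only [mem_ofPred_eq] at hy hz; positivity)
    · exact Or.inl (by rw [hzero hz]; simp only [mem_ofPred_eq] at hy; positivity)
    · exact Or.inl (by rw [hzero hy]; simp only [mem_ofPred_eq] at hz; positivity)
    · exact Or.inr (convex_convexHull ℝ _ hy hz ha.le hb.le hab)

theorem mem_convexHull_image_sep_eq_zero (f : E →ᵃ[ℝ] ℝ) (hU : ∀ v ∈ U, 0 ≤ f (p v))
    (hx : x ∈ convexHull ℝ (p '' U)) (hfx : f x ≤ 0) :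
    x ∈ convexHull ℝ (p '' {v ∈ U | f (p v) = 0}) := by
  refine convexHull_mono ?_ (mem_convexHull_sep_eq_zero f (forall_mem_image.2 hU) hx hfx)
  rintro - ⟨⟨v, hv, rfl⟩, hv0⟩
  exact ⟨v, ⟨hv, hv0⟩, rfl⟩

/-- The points of `T` span a face of the lower convex hull of the points `(p v, h v)`: an affine
function agrees with the heights on `T` and is below them elsewhere. -/
def IsLowerFace (p : V → E) (h : V → ℝ) (T : Set V) : Prop :=
  ∃ g : E →ᵃ[ℝ] ℝ, (∀ v ∈ T, g (p v) = h v) ∧ ∀ v ∉ T, g (p v) < h v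

theorem IsLowerFace.mem_convexHull_inter (hT : IsLowerFace p h T) (hT' : IsLowerFace p h T')
    (hU : U ⊆ T) (hx : x ∈ convexHull ℝ (p '' U)) (hx' : x ∈ convexHull ℝ (p '' T')) :
    x ∈ convexHull ℝ (p '' (U ∩ T')) := by
  obtain ⟨g, hg, hg'⟩ := hT
  obtain ⟨f, hf, hf'⟩ := hT'
  have hle {g : E →ᵃ[ℝ] ℝ} {T : Set V} (hg : ∀ v ∈ T, g (p v) = h v)
      (hg' : ∀ v ∉ T, g (p v) < h v) (v : V) : g (p v) ≤ h v := by
    by_cases hv : v ∈ T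
    exacts [(hg v hv).le, (hg' v hv).le]
  have hxle : (g - f) x ≤ 0 := by
    refine convexHull_min (forall_mem_image.2 fun v hv => ?_)
      ((convex_Iic (0 : ℝ)).affine_preimage (g - f)) hx'
    simpa [hf v hv] using hle hg hg' v
  refine convexHull_mono (image_mono ?_) (mem_convexHull_image_sep_eq_zero (g - f) ?_ hx hxle)
  · rintro v ⟨hv, hv0⟩
    refine ⟨hv, by_contra fun hvT' => (hf' v hvT').ne ?_⟩
    rw [← hg v (hU hv)]
    exact (sub_eq_zero.1 hv0).symm
  · intro v hv
    simpa [hg v (hU hv)] using hle hf hf' v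

theorem IsLowerFace.mem_of_affineMap_ne_zero (hT : IsLowerFace p h T) (hT' : IsLowerFace p h T')
    (hU : U ⊆ T') {v : V} {f : E →ᵃ[ℝ] ℝ} (hf : ∀ w ∈ T, w ≠ v → f (p w) = 0)
    (hx : x ∈ convexHull ℝ (p '' T)) (hfx : f x ≠ 0) (hxU : x ∈ convexHull ℝ (p '' U)) :
    v ∈ U := by
  by_contra hv
  refine hfx (convexHull_min (forall_mem_image.2 fun w hw => ?_)
    ((convex_singleton (0 : ℝ)).affine_preimage f) (hT'.mem_convexHull_inter hT hU hxU hx))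
  exact hf w hw.2 fun h => hv (h ▸ hw.1)

theorem mem_or_mem_convexHull_of_le_zero {a b c : V} {f : E →ᵃ[ℝ] ℝ} (ha : 0 < f (p a))
    (hb : f (p b) = 0) (hx : x ∈ convexHull ℝ (p '' (U ∩ {a, b, c}))) (hfx : f x ≤ 0) :
    (a ∈ U ∧ c ∈ U) ∨ x ∈ convexHull ℝ (p '' (U ∩ {b, c})) := by
  by_contra! h
  obtain ⟨hac, hxbc⟩ := h
  by_cases haU : a ∈ U
  · refine hxbc (convexHull_mono (image_mono ?_) (mem_convexHull_image_sep_eq_zero f ?_ hx hfx))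
    · rintro v ⟨⟨hvU, rfl | hv⟩, hv0⟩
      exacts [absurd hv0 ha.ne', ⟨hvU, hv⟩]
    · rintro v ⟨hvU, rfl | rfl | rfl⟩
      exacts [ha.le, hb.ge, absurd hvU (hac haU)]
  · refine hxbc (convexHull_mono (image_mono ?_) hx)
    rintro v ⟨hvU, rfl | hv⟩
    exacts [absurd hvU haU, ⟨hvU, hv⟩]

end LowerFaces

theorem eq_or_eq_add_one_or_eq_add_two : ∀ i j : Fin 3, j = i ∨ j = i + 1 ∨ j = i + 2 := by
  decide

theorem range_fin_three {α : Type*} (q : Fin 3 → α) (i : Fin 3) :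
    range q = {q i, q (i + 1), q (i + 2)} := by
  ext x
  constructor
  · rintro ⟨j, rfl⟩
    obtain rfl | rfl | rfl := eq_or_eq_add_one_or_eq_add_two i j <;> simp
  · rintro (rfl | rfl | rfl) <;> exact mem_range_self _

theorem injOn_segment_of_affineMap_ne {E : Type*} [AddCommGroup E] [Module ℝ E] {f : E →ᵃ[ℝ] ℝ}
    {a b : E} (hf : f a ≠ f b) : InjOn f (segment ℝ a b) := by
  rw [segment_eq_image_lineMap]
  rintro - ⟨s, -, rfl⟩ - ⟨t, -, rfl⟩ hst
  rw [AffineMap.apply_lineMap, AffineMap.apply_lineMap] at hst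
  rw [AffineMap.lineMap_injective ℝ hf hst]

section Plane

/-- Twice the signed area of the triangle `a b c`: positive if the triangle is counterclockwise. -/
def orient {R : Type*} [CommRing R] (a b c : R × R) : R :=
  (b.1 - a.1) * (c.2 - a.2) - (b.2 - a.2) * (c.1 - a.1)

section CommRing

variable {R : Type*} [CommRing R] (a b c : R × R)

theorem orient_rotate : orient b c a = orient a b c := by simp only [orient]; ring

theorem orient_swap : orient b a c = -orient a b c := by simp only [orient]; ring

@[simp] theorem orient_self_left : orient a a b = 0 := by simp only [orient]; ring

@[simp] theorem orient_self_right : orient a b b = 0 := by simp only [orient]; ring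

@[simp] theorem orient_self_outer : orient a b a = 0 := by simp only [orient]; ring

end CommRing

/-- The function `orient a b` as an affine map. -/
def orientMap (a b : ℝ × ℝ) : ℝ × ℝ →ᵃ[ℝ] ℝ :=
  ((b.1 - a.1) • LinearMap.snd ℝ ℝ ℝ - (b.2 - a.2) • LinearMap.fst ℝ ℝ ℝ).toAffineMap
    - AffineMap.const ℝ (ℝ × ℝ) ((b.1 - a.1) * a.2 - (b.2 - a.2) * a.1)

@[simp] theorem orientMap_apply (a b x : ℝ × ℝ) : orientMap a b x = orient a b x := by
  simp [orientMap, orient]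
  ring

variable {q : Fin 3 → ℝ × ℝ} {x : ℝ × ℝ}

theorem continuous_orient (a b : ℝ × ℝ) : Continuous (orient a b) := by
  unfold orient
  fun_prop

theorem orient_pos_of_mem_openSegment {a b c d : ℝ × ℝ} (hc : 0 < orient a b c)
    (hd : 0 ≤ orient a b d) (hx : x ∈ openSegment ℝ c d) : 0 < orient a b x := by
  obtain ⟨s, t, hs, ht, hst, rfl⟩ := hx
  rw [← orientMap_apply, Convex.combo_affine_apply hst, orientMap_apply, orientMap_apply]
  simp only [smul_eq_mul]
  positivity

/-- Barycentric coordinates: the coordinates of `x` with respect to the triangle `q` are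
proportional to its signed distances from the sides. -/
theorem orient_mul_affineMap (q : Fin 3 → ℝ × ℝ) (f : ℝ × ℝ →ᵃ[ℝ] ℝ) (x : ℝ × ℝ) :
    orient (q 0) (q 1) (q 2) * f x = ∑ i, orient (q (i + 1)) (q (i + 2)) x * f (q i) := by
  have hf (y : ℝ × ℝ) : f y = y.1 * f.linear (1, 0) + y.2 * f.linear (0, 1) + f 0 := by
    rw [← smul_eq_mul, ← smul_eq_mul, ← map_smul, ← map_smul, ← map_add]
    simpa using congrFun f.decomp y
  rw [Fin.sum_univ_three, hf x, hf (q 0), hf (q 1), hf (q 2)]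
  simp only [orient, Fin.reduceAdd, zero_add]
  ring

theorem orient_side_vertex (q : Fin 3 → ℝ × ℝ) (i : Fin 3) :
    orient (q (i + 1)) (q (i + 2)) (q i) = orient (q 0) (q 1) (q 2) := by
  fin_cases i
  exacts [orient_rotate _ _ _, (orient_rotate _ _ _).symm, rfl]

theorem mem_convexHull_range_iff (hq : 0 < orient (q 0) (q 1) (q 2)) :
    x ∈ convexHull ℝ (range q) ↔ ∀ i, 0 ≤ orient (q (i + 1)) (q (i + 2)) x := by
  constructor
  · intro hx i
    rw [← orientMap_apply]
    refine convexHull_min (forall_mem_range.2 fun j => ?_)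
      ((convex_Ici (0 : ℝ)).affine_preimage (orientMap (q (i + 1)) (q (i + 2)))) hx
    obtain rfl | rfl | rfl := eq_or_eq_add_one_or_eq_add_two i j
    · simpa [orient_side_vertex] using hq.le
    · simp
    · simp
  · intro hx
    have hsum (f : ℝ × ℝ →ᵃ[ℝ] ℝ) :
        ∑ i, orient (q (i + 1)) (q (i + 2)) x / orient (q 0) (q 1) (q 2) * f (q i) = f x := by
      simp only [div_mul_eq_mul_div, ← Finset.sum_div, ← orient_mul_affineMap]
      exact mul_div_cancel_left₀ _ hq.ne'
    have hmem := (convex_convexHull ℝ (range q)).sum_mem (t := Finset.univ)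
      (fun i _ => div_nonneg (hx i) hq.le) (by simpa using hsum (AffineMap.const ℝ _ 1))
      (fun i _ => subset_convexHull ℝ _ (mem_range_self i))
    convert hmem
    refine Prod.ext ?_ ?_
    · simpa [Prod.fst_sum] using (hsum (LinearMap.fst ℝ ℝ ℝ).toAffineMap).symm
    · simpa [Prod.snd_sum] using (hsum (LinearMap.snd ℝ ℝ ℝ).toAffineMap).symm

theorem mem_convexHull_image_range_iff {V : Type*} {p : V → ℝ × ℝ} {q : Fin 3 → V}
    (hq : 0 < orient (p (q 0)) (p (q 1)) (p (q 2))) :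
    x ∈ convexHull ℝ (p '' range q) ↔ ∀ i, 0 ≤ orient (p (q (i + 1))) (p (q (i + 2))) x := by
  rw [← range_comp, mem_convexHull_range_iff (q := p ∘ q) hq]
  rfl

theorem mem_segment_of_orient_nonpos (hq : 0 < orient (q 0) (q 1) (q 2))
    (hx : x ∈ convexHull ℝ (range q)) {i : Fin 3} (hi : orient (q (i + 1)) (q (i + 2)) x ≤ 0) :
    x ∈ segment ℝ (q (i + 1)) (q (i + 2)) := by
  rw [← orientMap_apply] at hi
  rw [← convexHull_pair]
  refine convexHull_mono ?_ (mem_convexHull_sep_eq_zero _ (forall_mem_range.2 fun j => ?_) hx hi)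
  · rintro y ⟨hy, hy0⟩
    obtain rfl | hy := range_fin_three q i ▸ hy
    · exact absurd hy0 (by simp [orient_side_vertex, hq.ne'])
    · exact hy
  · rw [orientMap_apply]
    exact (mem_convexHull_range_iff hq).1 (subset_convexHull ℝ (range q) (mem_range_self j)) i

theorem subset_convexHull_range_of_isPreconnected {A : Set (ℝ × ℝ)} (hA : IsPreconnected A)
    (hq : 0 < orient (q 0) (q 1) (q 2))
    (hside : ∀ i, Disjoint A (segment ℝ (q (i + 1)) (q (i + 2))))
    (hne : (A ∩ convexHull ℝ (range q)).Nonempty) : A ⊆ convexHull ℝ (range q) := by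
  set O : Set (ℝ × ℝ) := {x | ∀ i, 0 < orient (q (i + 1)) (q (i + 2)) x} with hO
  have hOsub : O ⊆ convexHull ℝ (range q) := fun x hx =>
    (mem_convexHull_range_iff hq).2 fun i => (hx i).le
  have hAO {x : ℝ × ℝ} (hxA : x ∈ A) (hx : x ∈ convexHull ℝ (range q)) : x ∈ O := fun i =>
    not_le.1 fun hi => disjoint_left.1 (hside i) hxA (mem_segment_of_orient_nonpos hq hx hi)
  have hOopen : IsOpen O := by
    simp only [hO, ofPred_forall]
    exact isOpen_iInter_of_finite fun i => isOpen_lt continuous_const (continuous_orient _ _)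
  have hclosed : IsClosed (convexHull ℝ (range q)) :=
    (finite_range q).isClosed_convexHull (𝕜 := ℝ)
  obtain ⟨x, hxA, hx⟩ := hne
  refine (hA.subset_left_of_subset_union hOopen hclosed.isOpen_compl
    (disjoint_compl_right.mono_left hOsub) (fun y hy => ?_) ⟨x, hxA, hAO hxA hx⟩).trans hOsub
  exact or_iff_not_imp_right.2 fun hyC => hAO hy (not_not.1 hyC)

end Plane

/-- The triangles `cell c` form the regular triangulation of the convex hull of the points `p v`
that is obtained by projecting the lower convex hull of the lifted points `(p v, h v)`. The
condition `sum_lt` says, with the denominator cleared, that the lifted point of a vertex outside a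
cell lies above the plane through the three lifted vertices of that cell. -/
structure IsRegularTriangulation {R V ι : Type*} [CommRing R] [PartialOrder R]
    (p : V → R × R) (h : V → R) (cell : ι → Fin 3 → V) : Prop where
  orient_pos : ∀ c, 0 < orient (p (cell c 0)) (p (cell c 1)) (p (cell c 2))
  sum_lt : ∀ c, ∀ w ∉ range (cell c),
    ∑ i, orient (p (cell c (i + 1))) (p (cell c (i + 2))) (p w) * h (cell c i)
      < orient (p (cell c 0)) (p (cell c 1)) (p (cell c 2)) * h w
  side : ∀ c i, (∀ w, 0 ≤ orient (p (cell c (i + 1))) (p (cell c (i + 2))) (p w)) ∨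
    ∃ c', cell c (i + 1) ∈ range (cell c') ∧ cell c (i + 2) ∈ range (cell c') ∧
      cell c i ∉ range (cell c')
  exists_mem_cell : ∀ v, ∃ c, v ∈ range (cell c)

namespace IsRegularTriangulation

variable {V ι : Type*} {p : V → ℝ × ℝ} {h : V → ℝ} {cell : ι → Fin 3 → V} {U : Set V}
  {u v w : V} {x : ℝ × ℝ} {c c' : ι}

/-- The affine function interpolating the heights at the vertices of the triangle `q`. -/
noncomputable def facetMap (p : V → ℝ × ℝ) (h : V → ℝ) (q : Fin 3 → V) : ℝ × ℝ →ᵃ[ℝ] ℝ :=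
  (orient (p (q 0)) (p (q 1)) (p (q 2)))⁻¹ •
    ∑ i, h (q i) • orientMap (p (q (i + 1))) (p (q (i + 2)))

theorem orient_mul_facetMap {q : Fin 3 → V} (hq : orient (p (q 0)) (p (q 1)) (p (q 2)) ≠ 0)
    (x : ℝ × ℝ) : orient (p (q 0)) (p (q 1)) (p (q 2)) * facetMap p h q x =
      ∑ i, orient (p (q (i + 1))) (p (q (i + 2))) x * h (q i) := by
  simp only [facetMap, AffineMap.coe_smul, Pi.smul_apply, smul_eq_mul, mul_inv_cancel_left₀ hq]
  simp [Fin.sum_univ_three, mul_comm]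

variable (ht : IsRegularTriangulation p h cell)
include ht

theorem facetMap_cell (c : ι) (i : Fin 3) :
    facetMap p h (cell c) (p (cell c i)) = h (cell c i) := by
  have hpos := (ht.orient_pos c).ne'
  refine mul_left_cancel₀ hpos ?_
  rw [orient_mul_facetMap hpos, Finset.sum_eq_single i, orient_side_vertex fun i => p (cell c i)]
  · intro j _ hj
    obtain rfl | rfl | rfl := eq_or_eq_add_one_or_eq_add_two j i
    · exact absurd rfl hj
    · simp
    · simp
  · simp

theorem facetMap_lt (hw : w ∉ range (cell c)) : facetMap p h (cell c) (p w) < h w := by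
  refine lt_of_mul_lt_mul_left ?_ (ht.orient_pos c).le
  rw [orient_mul_facetMap (ht.orient_pos c).ne']
  exact ht.sum_lt c w hw

theorem isLowerFace (c : ι) : IsLowerFace p h (range (cell c)) :=
  ⟨facetMap p h (cell c), forall_mem_range.2 (ht.facetMap_cell c), fun _ => ht.facetMap_lt⟩

theorem mem_convexHull_cell_iff : x ∈ convexHull ℝ (p '' range (cell c)) ↔
    ∀ i, 0 ≤ orient (p (cell c (i + 1))) (p (cell c (i + 2))) x :=
  mem_convexHull_image_range_iff (ht.orient_pos c)

theorem exists_mem_convexHull_cell [Finite ι] [Nonempty ι] (hx : x ∈ convexHull ℝ (range p)) :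
    ∃ c, x ∈ convexHull ℝ (p '' range (cell c)) := by
  obtain ⟨c, hc⟩ := Finite.exists_max fun c => facetMap p h (cell c) x
  refine ⟨c, ht.mem_convexHull_cell_iff.2 fun i => not_lt.1 fun hi => ?_⟩
  obtain hside | ⟨c', ⟨j, hj⟩, ⟨k, hk⟩, h₀⟩ := ht.side c i
  · rw [← orientMap_apply] at hi
    exact hi.not_ge (convexHull_min (forall_mem_range.2 fun w => by simpa using hside w)
      ((convex_Ici (0 : ℝ)).affine_preimage _) hx)
  · have hbary := orient_mul_affineMap (fun i => p (cell c i))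
      (facetMap p h (cell c') - facetMap p h (cell c)) x
    rw [Finset.sum_eq_single i] at hbary
    · have hlt : 0 < orient (p (cell c (i + 1))) (p (cell c (i + 2))) x *
          (facetMap p h (cell c') (p (cell c i)) - facetMap p h (cell c) (p (cell c i))) := by
        refine mul_pos_of_neg_of_neg hi (sub_neg.2 ?_)
        rw [ht.facetMap_cell]
        exact ht.facetMap_lt h₀
      exact (hc c').not_gt (sub_pos.1 (pos_of_mul_pos_right (hlt.trans_eq hbary.symm)
        (ht.orient_pos c).le))
    · intro m _ hm
      suffices facetMap p h (cell c') (p (cell c m)) = h (cell c m) by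
        simp [this, ht.facetMap_cell]
      obtain rfl | rfl | rfl := eq_or_eq_add_one_or_eq_add_two i m
      · exact absurd rfl hm
      · rw [← hj, ht.facetMap_cell]
      · rw [← hk, ht.facetMap_cell]
    · simp

theorem mem_of_orient_ne_zero (hU : U ⊆ range (cell c')) (hx : x ∈ convexHull ℝ (p '' U))
    (hxc : x ∈ convexHull ℝ (p '' range (cell c))) {i : Fin 3}
    (hi : orient (p (cell c (i + 1))) (p (cell c (i + 2))) x ≠ 0) : cell c i ∈ U := by
  refine (ht.isLowerFace c).mem_of_affineMap_ne_zero (ht.isLowerFace c') hU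
    (f := orientMap (p (cell c (i + 1))) (p (cell c (i + 2)))) ?_ hxc (by simpa using hi) hx
  rintro - ⟨j, rfl⟩ hj
  obtain rfl | rfl | rfl := eq_or_eq_add_one_or_eq_add_two i j
  · exact absurd rfl hj
  · simp
  · simp

theorem mem_of_mem_convexHull (hU : U ⊆ range (cell c)) (hw : p w ∈ convexHull ℝ (p '' U)) :
    w ∈ U := by
  obtain ⟨c', i, rfl⟩ := ht.exists_mem_cell w
  refine ht.mem_of_orient_ne_zero hU hw (subset_convexHull ℝ _ ⟨_, mem_range_self i, rfl⟩) ?_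
  rw [orient_side_vertex fun i => p (cell c' i)]
  exact (ht.orient_pos c').ne'

theorem injective : Function.Injective p := fun v w hvw => by
  obtain ⟨c, hc⟩ := ht.exists_mem_cell w
  exact (ht.mem_of_mem_convexHull (U := {w}) (singleton_subset_iff.2 hc) (by simp [hvw]) : v = w)

theorem mem_of_mem_openSegment (huc : u ∈ range (cell c)) (hvc : v ∈ range (cell c))
    (hU : U ⊆ range (cell c')) (hx : x ∈ openSegment ℝ (p u) (p v))
    (hxU : x ∈ convexHull ℝ (p '' U)) : u ∈ U := by
  have hsub := subset_convexHull ℝ (p '' range (cell c))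
  have hxc : x ∈ convexHull ℝ (p '' range (cell c)) :=
    (convex_convexHull ℝ _).openSegment_subset (hsub ⟨u, huc, rfl⟩) (hsub ⟨v, hvc, rfl⟩) hx
  obtain ⟨i, rfl⟩ := huc
  refine ht.mem_of_orient_ne_zero hU hxU hxc (ne_of_gt ?_)
  refine orient_pos_of_mem_openSegment ?_ ?_ hx
  · rw [orient_side_vertex fun i => p (cell c i)]
    exact ht.orient_pos c
  · exact ht.mem_convexHull_cell_iff.1 (hsub ⟨v, hvc, rfl⟩) i

end IsRegularTriangulation

section Quadrilaterals

theorem fin_four_cases : ∀ i j : Fin 4, j = i ∨ j = i + 1 ∨ j = i + 2 ∨ i = j + 1 := by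
  decide

variable {V : Type*} {p : V → ℝ × ℝ} {κ : Fin 4 → V} {x : ℝ × ℝ}

/-- The triangle cut off from the quadrilateral `κ` by the diagonal that avoids `κ (i + 1)`. -/
def corner (κ : Fin 4 → V) (i : Fin 4) : Fin 3 → V := ![κ i, κ (i + 1), κ (i + 2)]

/-- The diagonal of the quadrilateral `κ` through `κ i`. -/
def quadDiag (κ : Fin 4 → V) (i : Fin 4) : Sym2 V := s(κ i, κ (i + 2))

theorem range_corner (κ : Fin 4 → V) (i : Fin 4) :
    range (corner κ i) = {κ i, κ (i + 1), κ (i + 2)} := range_fin_three (corner κ i) 0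

theorem range_corner_subset (κ : Fin 4 → V) (i : Fin 4) : range (corner κ i) ⊆ range κ := by
  rw [range_corner]
  rintro _ (rfl | rfl | rfl) <;> exact mem_range_self _

theorem quadDiag_add_two (κ : Fin 4 → V) (i : Fin 4) : quadDiag κ (i + 2) = quadDiag κ i := by
  simp only [quadDiag, add_assoc, Fin.reduceAdd, add_zero]
  exact Sym2.eq_swap

theorem mk_quadDiag (κ : Fin 4 → V) (i : Fin 4) :
    s(quadDiag κ i, quadDiag κ (i + 1)) = s(quadDiag κ 0, quadDiag κ 1) := by
  have h₂ : quadDiag κ 2 = quadDiag κ 0 := quadDiag_add_two κ 0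
  have h₃ : quadDiag κ 3 = quadDiag κ 1 := quadDiag_add_two κ 1
  fin_cases i <;> simp [h₂, h₃, Sym2.eq_swap]

/-- The quadrilateral `κ` is strictly convex and counterclockwise. -/
def IsConvexQuad {R : Type*} [CommRing R] [LT R] (p : V → R × R) (κ : Fin 4 → V) : Prop :=
  ∀ i, 0 < orient (p (κ i)) (p (κ (i + 1))) (p (κ (i + 2)))

namespace IsConvexQuad

variable (hκ : IsConvexQuad p κ)
include hκ

theorem injective : Function.Injective κ := by
  have hne (i : Fin 4) : κ i ≠ κ (i + 1) ∧ κ i ≠ κ (i + 2) := by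
    have h := (hκ i).ne'
    exact ⟨fun h' => h (by rw [h', orient_self_left]), fun h' => h (by rw [h', orient_self_outer])⟩
  intro i j hij
  obtain rfl | rfl | rfl | rfl := fin_four_cases i j
  exacts [rfl, absurd hij (hne i).1, absurd hij (hne i).2, absurd hij.symm (hne j).1]

theorem mem_convexHull_corner_iff (i : Fin 4) :
    x ∈ convexHull ℝ (p '' range (corner κ i)) ↔ 0 ≤ orient (p (κ i)) (p (κ (i + 1))) x ∧
      0 ≤ orient (p (κ (i + 1))) (p (κ (i + 2))) x ∧ 0 ≤ orient (p (κ (i + 2))) (p (κ i)) x := by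
  rw [mem_convexHull_image_range_iff (q := corner κ i) (hκ i), Fin.forall_fin_succ,
    Fin.forall_fin_two]
  exact ⟨fun h => ⟨h.2.2, h.1, h.2.1⟩, fun h => ⟨h.2.1, h.2.2, h.1⟩⟩

theorem orient_diagonal_pos (i : Fin 4) : 0 < orient (p (κ i)) (p (κ (i + 2))) (p (κ (i + 3))) := by
  have h := hκ (i + 2)
  rw [orient_rotate] at h
  simpa only [add_assoc, Fin.reduceAdd, add_zero, orient_rotate] using h

theorem orient_diagonal_nonpos (i : Fin 4) (hx : x ∈ convexHull ℝ (p '' range (corner κ i))) :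
    orient (p (κ i)) (p (κ (i + 2))) x ≤ 0 := by
  rw [orient_swap]
  exact neg_nonpos.2 ((hκ.mem_convexHull_corner_iff i).1 hx).2.2

theorem orient_side_nonneg (i j : Fin 4) : 0 ≤ orient (p (κ i)) (p (κ (i + 1))) (p (κ j)) := by
  obtain rfl | rfl | rfl | rfl := fin_four_cases i j
  · simp
  · simp
  · exact (hκ i).le
  · simpa only [orient_rotate, add_assoc, Fin.reduceAdd] using (hκ j).le

theorem orient_side_nonneg_of_mem_convexHull (hx : x ∈ convexHull ℝ (p '' range κ)) (i : Fin 4) :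
    0 ≤ orient (p (κ i)) (p (κ (i + 1))) x := by
  rw [← orientMap_apply]
  refine convexHull_min ?_ ((convex_Ici (0 : ℝ)).affine_preimage _) hx
  rintro - ⟨-, ⟨j, rfl⟩, rfl⟩
  simpa using hκ.orient_side_nonneg i j

theorem mem_convexHull_corner_or (hx : x ∈ convexHull ℝ (p '' range κ)) (i : Fin 4) :
    x ∈ convexHull ℝ (p '' range (corner κ i)) ∨
      x ∈ convexHull ℝ (p '' range (corner κ (i + 2))) := by
  have hside := hκ.orient_side_nonneg_of_mem_convexHull hx
  simp only [hκ.mem_convexHull_corner_iff, add_assoc, Fin.reduceAdd, add_zero]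
  obtain h | h := le_total 0 (orient (p (κ (i + 2))) (p (κ i)) x)
  · exact Or.inl ⟨hside i, by simpa only [add_assoc, Fin.reduceAdd] using hside (i + 1), h⟩
  · refine Or.inr ⟨?_, ?_, ?_⟩
    · simpa only [add_assoc, Fin.reduceAdd] using hside (i + 2)
    · simpa only [add_assoc, Fin.reduceAdd, add_zero] using hside (i + 3)
    · rw [orient_swap]
      exact neg_nonneg.2 h

theorem exists_mem_convexHull_corner_inter (hx : x ∈ convexHull ℝ (p '' range κ)) :
    ∃ i, x ∈ convexHull ℝ (p '' range (corner κ i)) ∧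
      x ∈ convexHull ℝ (p '' range (corner κ (i + 1))) := by
  obtain h₀ | h₀ := hκ.mem_convexHull_corner_or hx 0 <;>
    obtain h₁ | h₁ := hκ.mem_convexHull_corner_or hx 1
  exacts [⟨0, h₀, h₁⟩, ⟨3, h₁, h₀⟩, ⟨1, h₁, h₀⟩, ⟨2, h₀, h₁⟩]

theorem orient_side_pos_of_mem_openSegment (hx : x ∈ openSegment ℝ (p (κ 1)) (p (κ 3)))
    (i : Fin 4) : 0 < orient (p (κ i)) (p (κ (i + 1))) x := by
  have h (i : Fin 4) : 0 < orient (p (κ (i + 1))) (p (κ (i + 2))) (p (κ i)) := by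
    rw [orient_rotate]
    exact hκ i
  have hx' := openSegment_symm ℝ (p (κ 1)) (p (κ 3)) ▸ hx
  fin_cases i
  exacts [orient_pos_of_mem_openSegment (h 3) (hκ.orient_side_nonneg 0 1) hx',
    orient_pos_of_mem_openSegment (hκ 1) (hκ.orient_side_nonneg 1 1) hx',
    orient_pos_of_mem_openSegment (h 1) (hκ.orient_side_nonneg 2 3) hx,
    orient_pos_of_mem_openSegment (hκ 3) (hκ.orient_side_nonneg 3 3) hx]

theorem exists_mem_openSegment_diagonals :
    ∃ y ∈ openSegment ℝ (p (κ 1)) (p (κ 3)), y ∈ openSegment ℝ (p (κ 0)) (p (κ 2)) := by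
  set s := orient (p (κ 2)) (p (κ 3)) (p (κ 0))
  set t := orient (p (κ 0)) (p (κ 1)) (p (κ 2))
  have hs : 0 < s := hκ 2
  have ht : 0 < t := hκ 0
  have hst : s / (s + t) + t / (s + t) = 1 := by field_simp
  set y := (s / (s + t)) • p (κ 1) + (t / (s + t)) • p (κ 3) with hy
  have hyopen : y ∈ openSegment ℝ (p (κ 1)) (p (κ 3)) :=
    ⟨_, _, by positivity, by positivity, hst, rfl⟩
  have hy0 : orient (p (κ 2)) (p (κ 0)) y = 0 := by
    have hs' : orient (p (κ 2)) (p (κ 0)) (p (κ 3)) = -s := by rw [orient_swap, ← orient_rotate]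
    have ht' : orient (p (κ 2)) (p (κ 0)) (p (κ 1)) = t := by rw [orient_rotate, orient_rotate]
    rw [← orientMap_apply, hy, Convex.combo_affine_apply hst, orientMap_apply, orientMap_apply,
      hs', ht', smul_eq_mul, smul_eq_mul]
    ring
  have hside := hκ.orient_side_pos_of_mem_openSegment hyopen
  refine ⟨y, hyopen, mem_openSegment_of_ne_left_right (fun h => ?_) (fun h => ?_) ?_⟩
  · exact (hside 0).ne' (by rw [← h]; exact orient_self_outer _ _)
  · exact (hside 1).ne' (by rw [← h]; exact orient_self_right _ _)
  · rw [segment_symm]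
    refine mem_segment_of_orient_nonpos (q := fun i => p (corner κ 0 i)) (i := 1) (hκ 0) ?_ hy0.le
    have hy := (hκ.mem_convexHull_corner_iff 0).2 ⟨(hside 0).le, (hside 1).le, hy0.ge⟩
    rwa [← range_comp] at hy

theorem subsingleton_openSegment_diagonals :
    (openSegment ℝ (p (κ 1)) (p (κ 3)) ∩ openSegment ℝ (p (κ 0)) (p (κ 2))).Subsingleton := by
  have h1 : 0 < orient (p (κ 2)) (p (κ 0)) (p (κ 1)) := by
    rw [orient_rotate, orient_rotate]
    exact hκ 0
  have h3 : orient (p (κ 2)) (p (κ 0)) (p (κ 3)) < 0 := by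
    rw [orient_swap, ← orient_rotate, neg_neg_iff_pos]
    exact hκ 2
  have hzero {y : ℝ × ℝ} (hy : y ∈ openSegment ℝ (p (κ 0)) (p (κ 2))) :
      orientMap (p (κ 2)) (p (κ 0)) y = 0 := by
    obtain ⟨s, t, -, -, hst, rfl⟩ := hy
    simp [Convex.combo_affine_apply hst]
  rintro x ⟨hx, hx'⟩ y ⟨hy, hy'⟩
  refine injOn_segment_of_affineMap_ne (f := orientMap (p (κ 2)) (p (κ 0))) ?_
    (openSegment_subset_segment _ _ _ hx) (openSegment_subset_segment _ _ _ hy)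
    ((hzero hx').trans (hzero hy').symm)
  simpa only [orientMap_apply] using (h3.trans h1).ne'

theorem notMem_quadDiag_succ {w : V} {i : Fin 4} (hw : w ∈ quadDiag κ i) :
    w ∉ quadDiag κ (i + 1) := by
  intro hw'
  obtain rfl | rfl := Sym2.mem_iff.1 hw <;> obtain h | h := Sym2.mem_iff.1 hw' <;>
    simpa [add_assoc] using hκ.injective h

end IsConvexQuad

end Quadrilaterals

section StraightLine

variable {V : Type} (G : SimpleGraph V) {p : V → ℝ × ℝ} (hp : Function.Injective p) {u v : V}

/-- The drawing of `G` in which every edge is a straight line segment. -/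
def straightLineDrawing : Drawing G where
  pos := p
  pos_inj := hp
  arc u v _ := segment ℝ (p u) (p v)
  arc_symm u v _ := segment_symm ℝ (p v) (p u)
  arc_isArc u v h := ⟨AffineMap.lineMap (p u) (p v),
    AffineMap.lineMap_continuous.continuousOn, ((AffineMap.lineMap_injective ℝ (hp.ne h.ne))).injOn,
    AffineMap.lineMap_apply_zero _ _, AffineMap.lineMap_apply_one _ _,
    segment_eq_image_lineMap ℝ (p u) (p v)⟩

variable {G}

theorem arcInt_straightLineDrawing (h : G.Adj u v) :
    (straightLineDrawing G hp).arcInt h = openSegment ℝ (p u) (p v) := by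
  change segment ℝ (p u) (p v) \ {p u, p v} = _
  have hne := hp.ne h.ne
  rw [← insert_endpoints_openSegment, insert_sdiff_of_mem _ (mem_insert _ _),
    insert_sdiff_of_mem _ (show p v ∈ {p u, p v} by simp), sdiff_eq_left, disjoint_insert_right,
    disjoint_singleton_right, left_mem_openSegment_iff, right_mem_openSegment_iff]
  exact ⟨hne, hne⟩

theorem exists_of_mem_edgeInt_straightLineDrawing {e : Sym2 V} {x : ℝ × ℝ}
    (hx : x ∈ (straightLineDrawing G hp).edgeInt e) :
    ∃ u v, G.Adj u v ∧ e = s(u, v) ∧ x ∈ openSegment ℝ (p u) (p v) := by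
  obtain ⟨u, v, h, rfl, hx⟩ := hx
  exact ⟨u, v, h, rfl, arcInt_straightLineDrawing hp h ▸ hx⟩

theorem edgeInt_straightLineDrawing (h : G.Adj u v) :
    (straightLineDrawing G hp).edgeInt s(u, v) = openSegment ℝ (p u) (p v) := by
  rw [Drawing.edgeInt_mk _ h, arcInt_straightLineDrawing]

end StraightLine

/-- The triangles of a triangulation of the plane into the triangles `tri` and the two halves into
which each quadrilateral `kite k` is cut by its diagonal through `kite k 0`. -/
def kiteCells {V T K : Type*} (tri : T → Fin 3 → V) (kite : K → Fin 4 → V) :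
    T ⊕ K ⊕ K → Fin 3 → V :=
  Sum.elim tri (Sum.elim (fun k => corner (kite k) 0) fun k => corner (kite k) 2)

/-- The vertices `p v` are those of a regular triangulation of the plane region inside the triangle
`outer` into the triangles `tri` and the halves of the convex quadrilaterals `kite`, and the edges
of `G` are the sides of the triangles and quadrilaterals together with both diagonals of each
quadrilateral. Conditions `kite_eq` and `face_eq` say that distinct quadrilaterals share no
diagonal, and that distinct triangles among `tri` and `outer` share no side, as vertex sets. -/
structure IsKiteTriangulation {R V T K : Type*} [CommRing R] [PartialOrder R]
    (G : SimpleGraph V) (p : V → R × R) (h : V → R) (tri : T → Fin 3 → V) (kite : K → Fin 4 → V)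
    (outer : Fin 3 → V) : Prop where
  regular : IsRegularTriangulation p h (kiteCells tri kite)
  convex : ∀ k, IsConvexQuad p (kite k)
  outer_pos : ∀ i w, w ≠ outer i → w ≠ outer (i + 1) →
    0 < orient (p (outer i)) (p (outer (i + 1))) (p w)
  adj_cell : ∀ c i, G.Adj (kiteCells tri kite c i) (kiteCells tri kite c (i + 1))
  adj_outer : ∀ i, G.Adj (outer i) (outer (i + 1))
  adj_kite : ∀ k, G.Adj (kite k 1) (kite k 3)
  exists_of_adj : ∀ u v, G.Adj u v →
    (∃ c, u ∈ range (kiteCells tri kite c) ∧ v ∈ range (kiteCells tri kite c)) ∨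
      ∃ k, s(u, v) = quadDiag (kite k) 1
  kite_eq : ∀ k l i, kite k i ∈ range (kite l) → kite k (i + 2) ∈ range (kite l) → k = l
  face_eq : ∀ (f g : Option T) i, f.elim outer tri i ∈ range (g.elim outer tri) →
    f.elim outer tri (i + 1) ∈ range (g.elim outer tri) → f = g

theorem adj_of_mem_range {V : Type*} {G : SimpleGraph V} {q : Fin 3 → V}
    (hq : ∀ i, G.Adj (q i) (q (i + 1))) {u v : V} (hu : u ∈ range q) (hv : v ∈ range q)
    (huv : u ≠ v) : G.Adj u v := by
  obtain ⟨i, rfl⟩ := hu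
  obtain ⟨j, rfl⟩ := hv
  obtain rfl | rfl | rfl := eq_or_eq_add_one_or_eq_add_two i j
  · exact absurd rfl huv
  · exact hq i
  · simpa only [add_assoc, Fin.reduceAdd, add_zero] using (hq (i + 2)).symm

namespace IsKiteTriangulation

section Cells

variable {V T K : Type*} {G : SimpleGraph V} {p : V → ℝ × ℝ} {h : V → ℝ} {tri : T → Fin 3 → V}
  {kite : K → Fin 4 → V} {outer : Fin 3 → V} {U : Set V} {u v w : V} {x : ℝ × ℝ}
  {c c' : T ⊕ K ⊕ K} {k l : K}

theorem exists_cell_eq_corner (tri : T → Fin 3 → V) (kite : K → Fin 4 → V) (k : K) {i : Fin 4}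
    (hi : i = 0 ∨ i = 2) : ∃ c, kiteCells tri kite c = corner (kite k) i := by
  obtain rfl | rfl := hi
  exacts [⟨.inr (.inl k), rfl⟩, ⟨.inr (.inr k), rfl⟩]

variable (hG : IsKiteTriangulation G p h tri kite outer)
include hG

theorem isLowerFace_corner (k : K) {i : Fin 4} (hi : i = 0 ∨ i = 2) :
    IsLowerFace p h (range (corner (kite k) i)) := by
  obtain ⟨c, hc⟩ := exists_cell_eq_corner tri kite k hi
  exact hc ▸ hG.regular.isLowerFace c

theorem corner_mem (hU : U ⊆ range (kiteCells tri kite c)) (hx : x ∈ convexHull ℝ (p '' U))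
    (hside : ∀ i, 0 < orient (p (kite k i)) (p (kite k (i + 1))) x) {i : Fin 4}
    (hi : i = 0 ∨ i = 2) (hxi : x ∈ convexHull ℝ (p '' range (corner (kite k) i))) :
    kite k i ∈ U ∧ kite k (i + 2) ∈ U := by
  obtain ⟨c', hc'⟩ := exists_cell_eq_corner tri kite k hi
  have hmem (j : Fin 3) (hj : orient (p (corner (kite k) i (j + 1)))
      (p (corner (kite k) i (j + 2))) x ≠ 0) : corner (kite k) i j ∈ U := by
    rw [← hc'] at hj hxi ⊢
    exact hG.regular.mem_of_orient_ne_zero hU hx hxi hj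
  refine ⟨hmem 0 ?_, hmem 2 (hside i).ne'⟩
  change orient (p (kite k (i + 1))) (p (kite k (i + 2))) x ≠ 0
  simpa only [add_assoc, Fin.reduceAdd] using (hside (i + 1)).ne'

theorem mem_of_mem_openSegment_diagonal
    (hx : x ∈ openSegment ℝ (p (kite k 1)) (p (kite k 3)))
    (hU : U ⊆ range (kiteCells tri kite c)) (hxU : x ∈ convexHull ℝ (p '' U)) :
    kite k 0 ∈ U ∧ kite k 2 ∈ U := by
  have hsub := subset_convexHull ℝ (p '' range (kite k))
  have hxk := (convex_convexHull ℝ _).openSegment_subset (hsub ⟨_, mem_range_self 1, rfl⟩)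
    (hsub ⟨_, mem_range_self 3, rfl⟩) hx
  have hside := (hG.convex k).orient_side_pos_of_mem_openSegment hx
  obtain h₀ | h₂ := (hG.convex k).mem_convexHull_corner_or hxk 0
  exacts [hG.corner_mem hU hxU hside (.inl rfl) h₀, (hG.corner_mem hU hxU hside (.inr rfl) h₂).symm]

theorem eq_of_quadDiag_eq {i j : Fin 4} (hij : quadDiag (kite k) i = quadDiag (kite l) j) :
    k = l ∧ quadDiag (kite k) (i + 1) = quadDiag (kite l) (j + 1) := by
  have hmem {w : V} (hw : w ∈ quadDiag (kite k) i) : w ∈ range (kite l) := by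
    obtain rfl | rfl := Sym2.mem_iff.1 (hij ▸ hw) <;> exact mem_range_self _
  obtain rfl := hG.kite_eq k l i (hmem (Sym2.mem_mk_left _ _)) (hmem (Sym2.mem_mk_right _ _))
  have hinj := (hG.convex k).injective
  refine ⟨rfl, ?_⟩
  obtain ⟨hi, -⟩ | ⟨hi, -⟩ := Sym2.eq_iff.1 hij
  · rw [hinj hi]
  · rw [hinj hi, add_right_comm, quadDiag_add_two]

theorem adj_kite_add_one (k : K) (i : Fin 4) : G.Adj (kite k i) (kite k (i + 1)) := by
  fin_cases i
  exacts [hG.adj_cell (.inr (.inl k)) 0, hG.adj_cell (.inr (.inl k)) 1,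
    hG.adj_cell (.inr (.inr k)) 0, hG.adj_cell (.inr (.inr k)) 1]

theorem quadDiag_mem_edgeSet (k : K) (i : Fin 4) : quadDiag (kite k) i ∈ G.edgeSet := by
  have h₀ : quadDiag (kite k) 0 ∈ G.edgeSet := (hG.adj_cell (.inr (.inl k)) 2).symm
  have h₁ : quadDiag (kite k) 1 ∈ G.edgeSet := hG.adj_kite k
  fin_cases i
  exacts [h₀, h₁, quadDiag_add_two (kite k) 0 ▸ h₀, quadDiag_add_two (kite k) 1 ▸ h₁]

theorem adj_of_mem_kite (hu : u ∈ range (kite k)) (hv : v ∈ range (kite k)) (huv : u ≠ v) :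
    G.Adj u v := by
  obtain ⟨i, rfl⟩ := hu
  obtain ⟨j, rfl⟩ := hv
  obtain rfl | rfl | rfl | rfl := fin_four_cases i j
  exacts [absurd rfl huv, hG.adj_kite_add_one k i, hG.quadDiag_mem_edgeSet k i,
    (hG.adj_kite_add_one k j).symm]

end Cells

end IsKiteTriangulation

section Crossings

variable {V : Type} {T K : Type*} {G : SimpleGraph V} {p : V → ℝ × ℝ} {h : V → ℝ}
  {tri : T → Fin 3 → V} {kite : K → Fin 4 → V} {outer : Fin 3 → V} {u v u' v' w : V} {x : ℝ × ℝ}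
  {c : T ⊕ K ⊕ K} {k : K} {e f : Sym2 V}

theorem openSegment_eq_of_mk_eq (p : V → ℝ × ℝ) (huv : s(u, v) = s(u', v')) :
    openSegment ℝ (p u) (p v) = openSegment ℝ (p u') (p v') := by
  obtain ⟨rfl, rfl⟩ | ⟨rfl, rfl⟩ := Sym2.eq_iff.1 huv
  exacts [rfl, openSegment_symm ℝ _ _]

namespace IsKiteTriangulation

variable (hG : IsKiteTriangulation G p h tri kite outer)
include hG

theorem eq_quadDiag_zero_of_mem (hu : u ∈ range (kiteCells tri kite c))
    (hv : v ∈ range (kiteCells tri kite c)) (hx : x ∈ openSegment ℝ (p u) (p v))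
    (hx' : x ∈ openSegment ℝ (p (kite k 1)) (p (kite k 3))) : s(u, v) = quadDiag (kite k) 0 := by
  obtain ⟨h₀, h₂⟩ := hG.mem_of_mem_openSegment_diagonal (U := {u, v}) hx' (pair_subset hu hv) <| by
    rw [image_pair, convexHull_pair]
    exact openSegment_subset_segment _ _ _ hx
  have hne : kite k 0 ≠ kite k 2 := (hG.convex k).injective.ne (by decide)
  exact ((Sym2.mem_and_mem_iff hne).1 ⟨by simpa using h₀, by simpa using h₂⟩)

theorem eq_of_mem_openSegment_diagonals
    (hx : x ∈ openSegment ℝ (p (kite k 1)) (p (kite k 3)))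
    (hx' : x ∈ openSegment ℝ (p (kite l 1)) (p (kite l 3))) : k = l := by
  have hsub := subset_convexHull ℝ (p '' range (kite l))
  have hxl := (convex_convexHull ℝ _).openSegment_subset (hsub ⟨_, mem_range_self 1, rfl⟩)
    (hsub ⟨_, mem_range_self 3, rfl⟩) hx'
  have hmem {i : Fin 4} (hi : i = 0 ∨ i = 2)
      (hxi : x ∈ convexHull ℝ (p '' range (corner (kite l) i))) : k = l := by
    obtain ⟨c, hc⟩ := exists_cell_eq_corner tri kite l hi
    obtain ⟨h₀, h₂⟩ := hG.mem_of_mem_openSegment_diagonal hx subset_rfl (hc ▸ hxi)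
    have hsub := hc ▸ range_corner_subset (kite l) i
    exact hG.kite_eq k l 0 (hsub h₀) (hsub h₂)
  exact ((hG.convex l).mem_convexHull_corner_or hxl 0).elim (hmem (.inl rfl)) (hmem (.inr rfl))

theorem exists_eq_quadDiag_of_mem (huv : G.Adj u v) (huv' : G.Adj u' v')
    (hne : s(u, v) ≠ s(u', v')) (hx : x ∈ openSegment ℝ (p u) (p v))
    (hx' : x ∈ openSegment ℝ (p u') (p v')) :
    ∃ k i, s(u, v) = quadDiag (kite k) i ∧ s(u', v') = quadDiag (kite k) (i + 1) := by
  obtain ⟨c, hu, hv⟩ | ⟨k, hk⟩ := hG.exists_of_adj u v huv <;>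
    obtain ⟨c', hu', hv'⟩ | ⟨k', hk'⟩ := hG.exists_of_adj u' v' huv'
  · have hxU : x ∈ convexHull ℝ (p '' {u', v'}) := by
      rw [image_pair, convexHull_pair]
      exact openSegment_subset_segment _ _ _ hx'
    have hU := pair_subset hu' hv'
    have hu₀ := hG.regular.mem_of_mem_openSegment hu hv hU hx hxU
    have hv₀ := hG.regular.mem_of_mem_openSegment hv hu hU (openSegment_symm ℝ (p u) (p v) ▸ hx) hxU
    refine absurd ((Sym2.mem_and_mem_iff huv.ne).1 ⟨?_, ?_⟩).symm hne <;> simpa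
  · rw [openSegment_eq_of_mk_eq p hk'] at hx'
    exact ⟨k', 0, hG.eq_quadDiag_zero_of_mem hu hv hx hx', hk'⟩
  · rw [openSegment_eq_of_mk_eq p hk] at hx
    exact ⟨k, 1, hk, (hG.eq_quadDiag_zero_of_mem hu' hv' hx' hx).trans
      (quadDiag_add_two (kite k) 0).symm⟩
  · rw [openSegment_eq_of_mk_eq p hk] at hx
    rw [openSegment_eq_of_mk_eq p hk'] at hx'
    obtain rfl := hG.eq_of_mem_openSegment_diagonals hx hx'
    exact absurd (hk.trans hk'.symm) hne

theorem eq_or_eq_of_mem_segment (huv : G.Adj u v) (hw : p w ∈ segment ℝ (p u) (p v)) :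
    w = u ∨ w = v := by
  obtain ⟨c, hu, hv⟩ | ⟨k, hk⟩ := hG.exists_of_adj u v huv
  · refine hG.regular.mem_of_mem_convexHull (pair_subset hu hv) ?_
    rwa [image_pair, convexHull_pair]
  · by_contra! hne
    have hw' := mem_openSegment_of_ne_left_right (hG.regular.injective.ne hne.1.symm)
      (hG.regular.injective.ne hne.2.symm) hw
    rw [openSegment_eq_of_mk_eq p hk] at hw'
    obtain ⟨c, hc⟩ := hG.regular.exists_mem_cell w
    obtain ⟨h₀, h₂⟩ := hG.mem_of_mem_openSegment_diagonal hw' (singleton_subset_iff.2 hc) (by simp)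
    exact absurd ((hG.convex k).injective (h₀.trans h₂.symm)) (by decide)

theorem edgeInt_quadDiag (k : K) (i : Fin 4) :
    (straightLineDrawing G hG.regular.injective).edgeInt (quadDiag (kite k) i) =
      openSegment ℝ (p (kite k i)) (p (kite k (i + 2))) :=
  edgeInt_straightLineDrawing _ (hG.quadDiag_mem_edgeSet k i)

theorem edgeInt_inter_edgeInt_quadDiag (k : K) (i : Fin 4) :
    (straightLineDrawing G hG.regular.injective).edgeInt (quadDiag (kite k) i) ∩
      (straightLineDrawing G hG.regular.injective).edgeInt (quadDiag (kite k) (i + 1)) =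
    openSegment ℝ (p (kite k 1)) (p (kite k 3)) ∩ openSegment ℝ (p (kite k 0)) (p (kite k 2)) := by
  rw [inter_comm (openSegment ℝ (p (kite k 1)) _)]
  obtain h | h := Sym2.eq_iff.1 (mk_quadDiag (kite k) i) <;> rw [h.1, h.2]
  · rw [hG.edgeInt_quadDiag, hG.edgeInt_quadDiag]
    rfl
  · rw [inter_comm, hG.edgeInt_quadDiag, hG.edgeInt_quadDiag]
    rfl

theorem exists_eq_quadDiag_of_mem_edgeInt (hef : e ≠ f)
    (hx : x ∈ (straightLineDrawing G hG.regular.injective).edgeInt e)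
    (hx' : x ∈ (straightLineDrawing G hG.regular.injective).edgeInt f) :
    ∃ k i, e = quadDiag (kite k) i ∧ f = quadDiag (kite k) (i + 1) := by
  obtain ⟨u, v, huv, rfl, hxu⟩ := exists_of_mem_edgeInt_straightLineDrawing hG.regular.injective hx
  obtain ⟨u', v', huv', rfl, hxv⟩ :=
    exists_of_mem_edgeInt_straightLineDrawing hG.regular.injective hx'
  exact hG.exists_eq_quadDiag_of_mem huv huv' hef hxu hxv

theorem cross_iff :
    (straightLineDrawing G hG.regular.injective).Cross e f ↔
      ∃ k i, e = quadDiag (kite k) i ∧ f = quadDiag (kite k) (i + 1) := by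
  refine ⟨fun ⟨hef, x, hx, hx'⟩ => hG.exists_eq_quadDiag_of_mem_edgeInt hef hx hx', ?_⟩
  rintro ⟨k, i, rfl, rfl⟩
  refine ⟨fun heq => ?_, ?_⟩
  · have hmem : kite k i ∈ quadDiag (kite k) i := Sym2.mem_mk_left _ _
    exact (hG.convex k).notMem_quadDiag_succ hmem (heq ▸ hmem)
  · rw [hG.edgeInt_inter_edgeInt_quadDiag]
    exact (hG.convex k).exists_mem_openSegment_diagonals

theorem isGood : (straightLineDrawing G hG.regular.injective).IsGood := by
  refine ⟨fun w u v huv hw => hG.eq_or_eq_of_mem_segment huv hw, fun e f hef x hx => ?_, ?_⟩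
  · obtain ⟨k, i, rfl, rfl⟩ := hG.exists_eq_quadDiag_of_mem_edgeInt hef hx.1 hx.2
    rw [hG.edgeInt_inter_edgeInt_quadDiag] at hx ⊢
    exact fun y hy => (hG.convex k).subsingleton_openSegment_diagonals hx hy
  · intro u v w huv huw hvw
    rw [eq_empty_iff_forall_notMem]
    rintro x ⟨hx, hx'⟩
    rw [arcInt_straightLineDrawing] at hx hx'
    obtain ⟨k, i, hi, hi'⟩ :=
      hG.exists_eq_quadDiag_of_mem huv huw (Sym2.congr_right.not.2 hvw) hx hx'
    exact (hG.convex k).notMem_quadDiag_succ (hi ▸ Sym2.mem_mk_left u v)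
      (hi' ▸ Sym2.mem_mk_left u w)

theorem isOnePlanar : (straightLineDrawing G hG.regular.injective).IsOnePlanar := by
  intro e f hf f' hf'
  obtain ⟨k, i, rfl, rfl⟩ := hG.cross_iff.1 hf
  obtain ⟨l, j, hij, rfl⟩ := hG.cross_iff.1 hf'
  exact (hG.eq_of_quadDiag_eq hij).2

theorem crNum_le [Finite V] [Finite K] :
    (straightLineDrawing G hG.regular.injective).crNum ≤ Nat.card K := by
  have hsub : (straightLineDrawing G hG.regular.injective).crossingGraph.edgeSet ⊆
      range fun k => s(quadDiag (kite k) 0, quadDiag (kite k) 1) := by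
    rintro ⟨e, f⟩ hef
    obtain ⟨k, i, rfl, rfl⟩ := hG.cross_iff.1 hef
    exact ⟨k, (mk_quadDiag (kite k) i).symm⟩
  rw [Drawing.crNum_eq_ncard, ← ncard_univ]
  exact (ncard_le_ncard hsub).trans (image_univ ▸ ncard_image_le finite_univ)

end IsKiteTriangulation

end Crossings

/-- A closed region `C` of the plane that reaches a triangle of `kiteCells tri kite`, as far as the
region's own vertices `F` are concerned, only in a face of the triangle: the points of `C` lying in
a face `U` lie in `U ∩ F`. The exception are the faces that contain the diagonal `kite k 0`,
`kite k 2` of a quadrilateral, which may cut through `C`. -/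
structure IsPocket {V T K : Type*} (p : V → ℝ × ℝ) (tri : T → Fin 3 → V) (kite : K → Fin 4 → V)
    (C : Set (ℝ × ℝ)) (F : Set V) : Prop where
  isClosed : IsClosed C
  mem_or : ∀ (c) (U : Set V), U ⊆ range (kiteCells tri kite c) → ∀ z ∈ C,
    z ∈ convexHull ℝ (p '' U) →
      z ∈ convexHull ℝ (p '' (U ∩ F)) ∨ ∃ k, kite k 0 ∈ U ∧ kite k 2 ∈ U

section Pockets

variable {V T K : Type*} {G : SimpleGraph V} {p : V → ℝ × ℝ} {h : V → ℝ} {tri : T → Fin 3 → V}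
  {kite : K → Fin 4 → V} {outer : Fin 3 → V} {C A : Set (ℝ × ℝ)} {F : Set V} {u v w : V}
  {x : ℝ × ℝ}

theorem subset_convexHull_of_disjoint_edges {q : Fin 3 → V} (hA : IsPreconnected A)
    (hdisj : ∀ u v, G.Adj u v → Disjoint A (segment ℝ (p u) (p v)))
    (hq : 0 < orient (p (q 0)) (p (q 1)) (p (q 2))) (hadj : ∀ i, G.Adj (q i) (q (i + 1)))
    (hxA : x ∈ A) (hx : x ∈ convexHull ℝ (p '' range q)) : A ⊆ convexHull ℝ (p '' range q) := by
  rw [← range_comp] at hx ⊢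
  refine subset_convexHull_range_of_isPreconnected hA hq (fun i => hdisj _ _ ?_) ⟨x, hxA, hx⟩
  simpa only [add_assoc, Fin.reduceAdd] using hadj (i + 1)

namespace IsKiteTriangulation

variable (hG : IsKiteTriangulation G p h tri kite outer)
include hG

theorem isPocket_tri (t : T) :
    IsPocket p tri kite (convexHull ℝ (p '' range (tri t))) (range (tri t)) where
  isClosed := ((toFinite _).isCompact_convexHull ℝ).isClosed
  mem_or c _ hU _ hzC hz := .inl <| (hG.regular.isLowerFace c).mem_convexHull_inter
    (hG.regular.isLowerFace (.inl t)) hU hz hzC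

theorem orient_outer_pos : 0 < orient (p (outer 0)) (p (outer 1)) (p (outer 2)) :=
  hG.outer_pos 0 (outer 2) (hG.adj_outer 2).ne (hG.adj_outer 1).ne'

theorem isPocket_outer :
    IsPocket p tri kite {z | ∃ i, orient (p (outer i)) (p (outer (i + 1))) z ≤ 0}
      (range outer) where
  isClosed := by
    simp only [ofPred_exists]
    exact isClosed_iUnion_of_finite fun i => isClosed_le (continuous_orient _ _) continuous_const
  mem_or _ U _ z := by
    rintro ⟨i, hi⟩ hz
    have hpos (w : V) : w = outer i ∨ w = outer (i + 1) ∨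
        0 < orient (p (outer i)) (p (outer (i + 1))) (p w) := by
      by_contra! hw
      exact hw.2.2.not_gt (hG.outer_pos i w hw.1 hw.2.1)
    refine .inl (convexHull_mono (image_mono ?_) (mem_convexHull_image_sep_eq_zero
      (orientMap (p (outer i)) (p (outer (i + 1)))) (fun w _ => ?_) hz (by simpa using hi)))
    · rintro w ⟨hwU, hw⟩
      rw [orientMap_apply] at hw
      obtain rfl | rfl | hw' := hpos w
      exacts [⟨hwU, mem_range_self _⟩, ⟨hwU, mem_range_self _⟩, absurd hw hw'.ne']
    · obtain rfl | rfl | hw := hpos w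
      exacts [by simp, by simp, by simpa using hw.le]

theorem isPocket_of_subset_corner {k : K} {i : Fin 4} (hi : i = 0 ∨ i = 2) {a b c : V}
    (habc : range (corner (kite k) i) = {a, b, c})
    (hac : ∀ U : Set V, a ∈ U ∧ c ∈ U → kite k 0 ∈ U ∧ kite k 2 ∈ U) {f : ℝ × ℝ →ᵃ[ℝ] ℝ}
    (ha : 0 < f (p a)) (hb : f (p b) = 0) (hC : IsClosed C)
    (hsub : C ⊆ convexHull ℝ (p '' range (corner (kite k) i))) (hf : ∀ z ∈ C, f z ≤ 0) :
    IsPocket p tri kite C {b, c} where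
  isClosed := hC
  mem_or c' U hU z hzC hz := by
    have hzU := (hG.regular.isLowerFace c').mem_convexHull_inter (hG.isLowerFace_corner k hi) hU hz
      (hsub hzC)
    rw [habc] at hzU
    exact (mem_or_mem_convexHull_of_le_zero ha hb hzU (hf z hzC)).symm.imp id fun h => ⟨k, hac U h⟩

theorem isPocket_quarter (k : K) (i : Fin 4) :
    IsPocket p tri kite (convexHull ℝ (p '' range (corner (kite k) i)) ∩
      convexHull ℝ (p '' range (corner (kite k) (i + 1)))) {kite k (i + 1), kite k (i + 2)} := by
  have hC (i : Fin 4) : IsClosed (convexHull ℝ (p '' range (corner (kite k) i)) ∩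
      convexHull ℝ (p '' range (corner (kite k) (i + 1)))) :=
    ((toFinite _).isCompact_convexHull ℝ).isClosed.inter
      ((toFinite _).isCompact_convexHull ℝ).isClosed
  have hhalf (i : Fin 4) : (i = 0 ∨ i = 2) ∨ i = 3 ∨ i = 1 := by decide +revert
  have hκ := hG.convex k
  obtain hi | hi := hhalf i
  · refine hG.isPocket_of_subset_corner hi (range_corner (kite k) i) ?_ (f := orientMap
      (p (kite k (i + 1))) (p (kite k (i + 1 + 2)))) ?_ (by simp) (hC i) inter_subset_left ?_
    · obtain rfl | rfl := hi
      exacts [fun U h => h, fun U h => h.symm]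
    · simpa [add_assoc] using hκ.orient_diagonal_pos (i + 1)
    · exact fun z hz => by simpa using hκ.orient_diagonal_nonpos (i + 1) hz.2
  · rw [pair_comm]
    refine hG.isPocket_of_subset_corner (a := kite k (i + 3)) (i := i + 1)
      (by obtain rfl | rfl := hi <;> decide) ?_ ?_ (f := orientMap
      (p (kite k i)) (p (kite k (i + 2)))) ?_ (by simp) (hC i) inter_subset_right ?_
    · rw [range_corner, pair_comm, insert_comm, pair_comm]
      simp only [add_assoc, Fin.reduceAdd]
    · obtain rfl | rfl := hi
      exacts [fun U h => h.symm, fun U h => h]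
    · simpa using hκ.orient_diagonal_pos i
    · exact fun z hz => by simpa using hκ.orient_diagonal_nonpos i hz.1

theorem mem_of_mem_pocket (hC : IsPocket p tri kite C F) (hw : p w ∈ C) : w ∈ F := by
  obtain ⟨c, hc⟩ := hG.regular.exists_mem_cell w
  obtain hwF | ⟨k, h₀, h₂⟩ := hC.mem_or c {w} (singleton_subset_iff.2 hc) _ hw (by simp)
  · by_contra hwF'
    rw [singleton_inter_eq_empty.2 hwF', image_empty, convexHull_empty] at hwF
    exact hwF
  · exact absurd ((hG.convex k).injective (h₀.trans h₂.symm)) (by decide)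

theorem mem_pocket_of_mem_openSegment (hC : IsPocket p tri kite C F) (huv : G.Adj u v)
    (hdiag : ∀ k i, s(u, v) ≠ quadDiag (kite k) i) (hxC : x ∈ C)
    (hx : x ∈ openSegment ℝ (p u) (p v)) : u ∈ F := by
  obtain ⟨c, hu, hv⟩ | ⟨k, hk⟩ := hG.exists_of_adj u v huv
  · have hU := pair_subset hu hv
    have hxU : x ∈ convexHull ℝ (p '' {u, v}) := by
      rw [image_pair, convexHull_pair]
      exact openSegment_subset_segment _ _ _ hx
    obtain hxF | ⟨k, h₀, h₂⟩ := hC.mem_or c _ hU x hxC hxU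
    · exact (hG.regular.mem_of_mem_openSegment hu hv (inter_subset_left.trans hU) hx hxF).2
    · have hne : kite k 0 ≠ kite k 2 := (hG.convex k).injective.ne (by decide)
      exact absurd ((Sym2.mem_and_mem_iff hne).1 ⟨by simpa using h₀, by simpa using h₂⟩) (hdiag k 0)
  · exact absurd hk (hdiag k 1)

theorem subset_convexHull_corner_of_disjoint_edges (hA : IsPreconnected A)
    (hdisj : ∀ u v, G.Adj u v → Disjoint A (segment ℝ (p u) (p v))) (hxA : x ∈ A) {k : K}
    {i : Fin 4} (hx : x ∈ convexHull ℝ (p '' range (corner (kite k) i))) :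
    A ⊆ convexHull ℝ (p '' range (corner (kite k) i)) := by
  have hinj := (hG.convex k).injective
  have hne : ∀ i : Fin 4, i ≠ i + 1 ∧ i + 1 ≠ i + 2 ∧ i + 2 ≠ i := by decide
  refine subset_convexHull_of_disjoint_edges hA hdisj (hG.convex k i) (fun j => ?_) hxA hx
  refine hG.adj_of_mem_kite (range_corner_subset _ i (mem_range_self j))
    (range_corner_subset _ i (mem_range_self (j + 1))) ?_
  fin_cases j
  exacts [hinj.ne (hne i).1, hinj.ne (hne i).2.1, hinj.ne (hne i).2.2]

theorem exists_pocket_of_disjoint_edges [Finite T] [Finite K] (hA : IsPreconnected A)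
    (hdisj : ∀ u v, G.Adj u v → Disjoint A (segment ℝ (p u) (p v))) :
    ∃ C F, IsPocket p tri kite C F ∧ A ⊆ C ∧ ((∃ f : Option T, F = range (f.elim outer tri)) ∨
      ∃ k i, F = {kite k i, kite k (i + 1)}) := by
  obtain hout | hout := em (Disjoint A (convexHull ℝ (range p)))
  · refine ⟨_, _, hG.isPocket_outer, fun y hy => ?_, .inl ⟨none, rfl⟩⟩
    by_contra hy'
    refine disjoint_left.1 hout hy (convexHull_mono (image_subset_range p (range outer)) ?_)
    refine (mem_convexHull_image_range_iff hG.orient_outer_pos).2 fun i => ?_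
    exact not_lt.1 fun hi => hy' ⟨i + 1, by simpa only [add_assoc, Fin.reduceAdd] using hi.le⟩
  obtain ⟨x, hxA, hx⟩ := not_disjoint_iff.1 hout
  have : Nonempty (T ⊕ K ⊕ K) := (hG.regular.exists_mem_cell (outer 0)).nonempty
  obtain ⟨t | c, hc⟩ := hG.regular.exists_mem_convexHull_cell hx
  · exact ⟨_, _, hG.isPocket_tri t, subset_convexHull_of_disjoint_edges hA hdisj
      (hG.regular.orient_pos (.inl t)) (hG.adj_cell (.inl t)) hxA hc, .inl ⟨some t, rfl⟩⟩
  obtain ⟨k, i, hck⟩ : ∃ k i, kiteCells tri kite (.inr c) = corner (kite k) i := by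
    obtain k | k := c
    exacts [⟨k, 0, rfl⟩, ⟨k, 2, rfl⟩]
  have hxk := convexHull_mono (image_mono (range_corner_subset _ i)) (hck ▸ hc)
  obtain ⟨j, hj, hj'⟩ := (hG.convex k).exists_mem_convexHull_corner_inter hxk
  exact ⟨_, _, hG.isPocket_quarter k j,
    subset_inter (hG.subset_convexHull_corner_of_disjoint_edges hA hdisj hxA hj)
      (hG.subset_convexHull_corner_of_disjoint_edges hA hdisj hxA hj'),
    .inr ⟨k, j + 1, by simp only [add_assoc, Fin.reduceAdd]⟩⟩

end IsKiteTriangulation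

end Pockets

namespace Drawing

variable {V : Type} {H : SimpleGraph V} {D : Drawing H} {u v w : V} {e f : Sym2 V}

theorem exists_arcInt_eq_image (D : Drawing H) (h : H.Adj u v) :
    ∃ γ : ℝ → ℝ × ℝ, ContinuousOn γ (Icc 0 1) ∧ InjOn γ (Icc 0 1) ∧ γ 0 = D.pos u ∧
      γ 1 = D.pos v ∧ D.arcInt h = γ '' Ioo 0 1 := by
  obtain ⟨γ, hγ, hinj, h₀, h₁, harc⟩ := D.arc_isArc h
  refine ⟨γ, hγ, hinj, h₀, h₁, ?_⟩
  have hends : ({0, 1} : Set ℝ) ⊆ Icc 0 1 := pair_subset (by simp) (by simp)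
  rw [arcInt, harc, ← h₀, ← h₁, ← image_pair, ← hinj.image_sdiff_subset hends,
    Icc_sdiff_both]

theorem IsGood.pos_notMem_edgeInt (hD : D.IsGood) (w : V) (e : Sym2 V) : D.pos w ∉ D.edgeInt e := by
  rintro ⟨u, v, h, -, hw, hne⟩
  obtain rfl | rfl := hD.1 w h hw <;> simp at hne

theorem IsGood.notMem_of_cross (hD : D.IsGood) (hef : D.Cross e f) (hv : v ∈ e) : v ∉ f := by
  intro hv'
  obtain ⟨a, rfl⟩ := Sym2.mem_iff_exists.1 hv
  obtain ⟨b, rfl⟩ := Sym2.mem_iff_exists.1 hv'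
  obtain ⟨hne, x, hx, hx'⟩ := hef
  obtain ⟨a', b', ha, heq, -⟩ := id hx
  obtain ⟨c', d', hb, heq', -⟩ := id hx'
  rw [← SimpleGraph.mem_edgeSet, ← heq] at ha
  rw [← SimpleGraph.mem_edgeSet, ← heq'] at hb
  rw [D.edgeInt_mk ha] at hx
  rw [D.edgeInt_mk hb] at hx'
  have hab : a ≠ b := fun hab => hne (congrArg (s(v, ·)) hab)
  exact (hD.2.2 ha hb hab).subset ⟨hx, hx'⟩

theorem edgeInt_restrict {G : SimpleGraph V} (hle : G ≤ H) (he : e ∈ G.edgeSet) :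
    (D.restrict hle).edgeInt e = D.edgeInt e := by
  induction e with
  | h u v => rw [edgeInt_mk _ he, edgeInt_mk _ (hle he)]; rfl

theorem restrict_cross_iff {G : SimpleGraph V} (hle : G ≤ H) (he : e ∈ G.edgeSet)
    (hf : f ∈ G.edgeSet) : (D.restrict hle).Cross e f ↔ D.Cross e f := by
  simp only [Cross, edgeInt_restrict hle he, edgeInt_restrict hle hf]

theorem restrict_eq_of_arc_eq {G : SimpleGraph V} {D' : Drawing G} (hle : G ≤ H)
    (hpos : D.pos = D'.pos) (harc : ∀ ⦃u v⦄ (h : G.Adj u v), D.arc (hle h) = D'.arc h) :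
    D.restrict hle = D' := by
  cases D'
  simp only [restrict, mk.injEq]
  exact ⟨hpos, by funext u v h; exact harc h⟩

end Drawing

section Extension

variable {V : Type} {T K : Type*} {G H : SimpleGraph V} {D : Drawing H} {h : V → ℝ}
  {tri : T → Fin 3 → V} {kite : K → Fin 4 → V} {outer : Fin 3 → V} {C : Set (ℝ × ℝ)} {F : Set V}
  {p : V → ℝ × ℝ} {u v a b : V} {x : ℝ × ℝ} {e : Sym2 V}

namespace IsKiteTriangulation

variable (hG : IsKiteTriangulation G p h tri kite outer)
include hG

theorem adj_of_mem_face (f : Option T) (hu : u ∈ range (f.elim outer tri))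
    (hv : v ∈ range (f.elim outer tri)) (huv : u ≠ v) : G.Adj u v :=
  match f with
  | none => adj_of_mem_range hG.adj_outer hu hv huv
  | some t => adj_of_mem_range (hG.adj_cell (.inl t)) hu hv huv

theorem eq_of_mem_faces (f g : Option T) (haf : a ∈ range (f.elim outer tri))
    (hbf : b ∈ range (f.elim outer tri)) (hag : a ∈ range (g.elim outer tri))
    (hbg : b ∈ range (g.elim outer tri)) (hab : a ≠ b) : f = g := by
  obtain ⟨i, rfl⟩ := haf
  obtain ⟨j, rfl⟩ := hbf
  obtain rfl | rfl | rfl := eq_or_eq_add_one_or_eq_add_two i j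
  · exact absurd rfl hab
  · exact hG.face_eq f g i hag hbg
  · exact hG.face_eq f g (i + 2) hbg (by simpa only [add_assoc, Fin.reduceAdd, add_zero] using hag)

theorem exists_pocket_of_continuousOn [Finite T] [Finite K] {γ : ℝ → ℝ × ℝ} {s t : ℝ} (hst : s < t)
    (hγ : ContinuousOn γ (Icc s t))
    (hdisj : ∀ r ∈ Ioo s t, ∀ u v, G.Adj u v → γ r ∉ segment ℝ (p u) (p v)) :
    ∃ C F, IsPocket p tri kite C F ∧ γ s ∈ C ∧ γ t ∈ C ∧
      ((∃ f : Option T, F = range (f.elim outer tri)) ∨ ∃ k i, F = {kite k i, kite k (i + 1)}) := by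
  obtain ⟨C, F, hC, hsub, hF⟩ := hG.exists_pocket_of_disjoint_edges
    (isPreconnected_Ioo.image γ (hγ.mono Ioo_subset_Icc_self)) fun u v huv =>
      disjoint_left.2 (forall_mem_image.2 fun r hr => hdisj r hr u v huv)
  have hIcc : γ '' Icc s t ⊆ C := by
    rw [← closure_Ioo hst.ne] at hγ ⊢
    exact hγ.image_closure.trans (hC.isClosed.closure_subset_iff.2 hsub)
  exact ⟨C, F, hC, hIcc (mem_image_of_mem γ (left_mem_Icc.2 hst.le)),
    hIcc (mem_image_of_mem γ (right_mem_Icc.2 hst.le)), hF⟩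

theorem exists_face_of_pocket (hC : IsPocket p tri kite C F)
    (hF : (∃ f : Option T, F = range (f.elim outer tri)) ∨ ∃ k i, F = {kite k i, kite k (i + 1)})
    (hab : G.Adj a b) (hdiag : ∀ k i, s(a, b) ≠ quadDiag (kite k) i) (hxC : x ∈ C)
    (hx : x ∈ openSegment ℝ (p a) (p b)) (huC : p u ∈ C) (hu : u ∉ s(a, b)) :
    ∃ f : Option T, u ∈ range (f.elim outer tri) ∧ a ∈ range (f.elim outer tri) ∧
      b ∈ range (f.elim outer tri) := by
  have huF := hG.mem_of_mem_pocket hC huC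
  have haF := hG.mem_pocket_of_mem_openSegment hC hab hdiag hxC hx
  have hbF := hG.mem_pocket_of_mem_openSegment hC hab.symm (Sym2.eq_swap (a := a) ▸ hdiag) hxC
    (openSegment_symm ℝ (p a) (p b) ▸ hx)
  obtain ⟨f, rfl⟩ | ⟨k, i, rfl⟩ := hF
  · exact ⟨f, huF, haF, hbF⟩
  · have := hab.ne
    simp only [Sym2.mem_iff, not_or] at hu
    grind

theorem edgeInt_eq_openSegment {hle : G ≤ H}
    (hres : D.restrict hle = straightLineDrawing G hG.regular.injective) (hab : G.Adj a b) :
    D.edgeInt s(a, b) = openSegment ℝ (p a) (p b) := by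
  rw [← edgeInt_straightLineDrawing hG.regular.injective hab, ← hres,
    Drawing.edgeInt_restrict hle hab]

theorem mem_edgeInt_of_mem_segment (hD : D.IsGood) {hle : G ≤ H}
    (hres : D.restrict hle = straightLineDrawing G hG.regular.injective) (hab : G.Adj a b)
    (hxe : x ∈ D.edgeInt e) (hx : x ∈ segment ℝ (p a) (p b)) : x ∈ D.edgeInt s(a, b) := by
  have hpos : D.pos = p := congrArg Drawing.pos hres
  rw [hG.edgeInt_eq_openSegment hres hab]
  refine mem_openSegment_of_ne_left_right ?_ ?_ hx <;> rintro rfl <;>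
    exact hD.pos_notMem_edgeInt _ e (hpos ▸ hxe)

theorem adj_of_disjoint_edges [Finite T] [Finite K] {γ : ℝ → ℝ × ℝ}
    (hγ : ContinuousOn γ (Icc 0 1)) (h₀ : γ 0 = p u) (h₁ : γ 1 = p v) (huv : u ≠ v)
    (hdisj : ∀ r ∈ Ioo 0 1, ∀ a b, G.Adj a b → γ r ∉ segment ℝ (p a) (p b)) : G.Adj u v := by
  obtain ⟨C, F, hC, hu, hv, hF⟩ := hG.exists_pocket_of_continuousOn one_pos hγ hdisj
  have huF := hG.mem_of_mem_pocket hC (h₀ ▸ hu)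
  have hvF := hG.mem_of_mem_pocket hC (h₁ ▸ hv)
  obtain ⟨f, rfl⟩ | ⟨k, i, rfl⟩ := hF
  · exact hG.adj_of_mem_face f huF hvF huv
  · exact hG.adj_of_mem_kite (k := k) (by grind) (by grind) huv

theorem adj_of_mem_openSegment [Finite T] [Finite K] {γ : ℝ → ℝ × ℝ} {s : ℝ}
    (hγ : ContinuousOn γ (Icc 0 1)) (h₀ : γ 0 = p u) (h₁ : γ 1 = p v) (huv : u ≠ v)
    (hs : s ∈ Ioo 0 1) (hab : G.Adj a b) (hsab : γ s ∈ openSegment ℝ (p a) (p b))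
    (hu : u ∉ s(a, b)) (hv : v ∉ s(a, b)) (hdiag : ∀ k i, s(a, b) ≠ quadDiag (kite k) i)
    (huniq : ∀ r ∈ Ioo 0 1, ∀ c d, G.Adj c d → γ r ∈ segment ℝ (p c) (p d) → r = s) :
    G.Adj u v := by
  obtain ⟨C, F, hC, huC, hsC, hF⟩ := hG.exists_pocket_of_continuousOn hs.1
    (hγ.mono (Icc_subset_Icc_right hs.2.le)) fun r hr c d hcd hmem =>
      hr.2.ne (huniq r ⟨hr.1, hr.2.trans hs.2⟩ c d hcd hmem)
  obtain ⟨C', F', hC', hsC', hvC', hF'⟩ := hG.exists_pocket_of_continuousOn hs.2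
    (hγ.mono (Icc_subset_Icc_left hs.1.le)) fun r hr c d hcd hmem =>
      hr.1.ne' (huniq r ⟨hs.1.trans hr.1, hr.2⟩ c d hcd hmem)
  obtain ⟨f, huf, haf, hbf⟩ :=
    hG.exists_face_of_pocket hC hF hab hdiag hsC hsab (h₀ ▸ huC) hu
  obtain ⟨g, hvg, hag, hbg⟩ :=
    hG.exists_face_of_pocket hC' hF' hab hdiag hsC' hsab (h₁ ▸ hvC') hv
  obtain rfl := hG.eq_of_mem_faces f g haf hbf hag hbg hab.ne
  exact hG.adj_of_mem_face f huf hvg huv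

theorem adj_of_extension [Finite T] [Finite K] {hle : G ≤ H}
    (hres : D.restrict hle = straightLineDrawing G hG.regular.injective) (hD : D.IsGood)
    (hD' : D.IsOnePlanar) (huv : H.Adj u v) : G.Adj u v := by
  by_contra hnadj
  have hpos : D.pos = p := congrArg Drawing.pos hres
  obtain ⟨γ, hγ, hinj, h₀, h₁, harc⟩ := D.exists_arcInt_eq_image huv
  rw [hpos] at h₀ h₁
  have hedge : ∀ r ∈ Ioo 0 1, γ r ∈ D.edgeInt s(u, v) := fun r hr => by
    rw [D.edgeInt_mk huv, harc]
    exact mem_image_of_mem γ hr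
  have hne : ∀ {e}, e ∈ G.edgeSet → s(u, v) ≠ e := fun he heq => hnadj (heq ▸ he :)
  have hmem : ∀ r ∈ Ioo 0 1, ∀ {a b}, G.Adj a b → γ r ∈ segment ℝ (p a) (p b) →
      γ r ∈ D.edgeInt s(a, b) := fun r hr a b hab =>
    hG.mem_edgeInt_of_mem_segment hD hres hab (hedge r hr)
  by_cases hdisj : ∀ r ∈ Ioo 0 1, ∀ a b, G.Adj a b → γ r ∉ segment ℝ (p a) (p b)
  · exact hnadj (hG.adj_of_disjoint_edges hγ h₀ h₁ huv.ne hdisj)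
  push Not at hdisj
  obtain ⟨s, hs, a, b, hab, hsab⟩ := hdisj
  have hsab := hmem s hs hab hsab
  have hcross : D.Cross s(u, v) s(a, b) := ⟨hne hab, γ s, hedge s hs, hsab⟩
  refine hnadj (hG.adj_of_mem_openSegment hγ h₀ h₁ huv.ne hs hab
    (hG.edgeInt_eq_openSegment hres hab ▸ hsab) (hD.notMem_of_cross hcross (by simp))
    (hD.notMem_of_cross hcross (by simp)) (fun k i hki => ?_) fun r hr c d hcd hrcd => ?_)
  · have hcross' : D.Cross s(a, b) (quadDiag (kite k) (i + 1)) := by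
      rw [← Drawing.restrict_cross_iff hle hab (hG.quadDiag_mem_edgeSet k (i + 1)), hres]
      exact hG.cross_iff.2 ⟨k, i, hki, rfl⟩
    exact hne (hG.quadDiag_mem_edgeSet k (i + 1)) (hD' _ (D.crossingGraph.adj_symm hcross) hcross')
  · have hrcd := hmem r hr hcd hrcd
    have heq : s(c, d) = s(a, b) := hD' _ ⟨hne hcd, γ r, hedge r hr, hrcd⟩ hcross
    have := hD.2.1 _ _ (hne hab) ⟨hedge r hr, heq ▸ hrcd⟩ ⟨hedge s hs, hsab⟩
    exact hinj (Ioo_subset_Icc_self hr) (Ioo_subset_Icc_self hs) this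

theorem isMaximalOnePlane [Finite T] [Finite K] :
    (straightLineDrawing G hG.regular.injective).IsMaximalOnePlane :=
  ⟨hG.isGood, hG.isOnePlanar, fun u v huv hnadj D hpos harc hD =>
    hnadj (hG.adj_of_extension (hle := le_sup_left)
      (Drawing.restrict_eq_of_arc_eq le_sup_left hpos harc) hD.1 hD.2 (by simp [huv]))⟩

end IsKiteTriangulation

end Extension

section Map

variable {R S V ι T K : Type*} [CommRing R] [CommRing S] (f : R →+* S)

theorem orient_map (a b c : R × R) :
    orient (a.map f f) (b.map f f) (c.map f f) = f (orient a b c) := by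
  simp [orient]

variable [PartialOrder R] [PartialOrder S] {f} (hf : StrictMono f) {G : SimpleGraph V}
  {p : V → R × R} {h : V → R} {cell : ι → Fin 3 → V} {tri : T → Fin 3 → V} {kite : K → Fin 4 → V}
  {outer : Fin 3 → V}

include hf

theorem orient_map_pos {a b c : R × R} (habc : 0 < orient a b c) :
    0 < orient (a.map f f) (b.map f f) (c.map f f) := by
  rw [orient_map, ← map_zero f]
  exact hf habc

theorem IsRegularTriangulation.map (ht : IsRegularTriangulation p h cell) :
    IsRegularTriangulation (fun v => (p v).map f f) (fun v => f (h v)) cell where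
  orient_pos c := orient_map_pos hf (ht.orient_pos c)
  sum_lt c w hw := by
    simp only [orient_map, ← map_mul, ← map_sum]
    exact hf (ht.sum_lt c w hw)
  side c i := (ht.side c i).imp_left fun hw w => by
    rw [orient_map, ← map_zero f]
    exact hf.monotone (hw w)
  exists_mem_cell := ht.exists_mem_cell

theorem IsKiteTriangulation.map (hG : IsKiteTriangulation G p h tri kite outer) :
    IsKiteTriangulation G (fun v => (p v).map f f) (fun v => f (h v)) tri kite outer where
  regular := hG.regular.map hf
  convex k i := orient_map_pos hf (hG.convex k i)
  outer_pos i w hw hw' := orient_map_pos hf (hG.outer_pos i w hw hw')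
  adj_cell := hG.adj_cell
  adj_outer := hG.adj_outer
  adj_kite := hG.adj_kite
  exists_of_adj := hG.exists_of_adj
  kite_eq := hG.kite_eq
  face_eq := hG.face_eq

end Map

theorem IsKiteTriangulation.crossingNumber_eq {V : Type} [Finite V] {T K : Type*} [Finite K]
    {G : SimpleGraph V} {p : V → ℝ × ℝ} {h : V → ℝ} {tri : T → Fin 3 → V} {kite : K → Fin 4 → V}
    {outer : Fin 3 → V} (hG : IsKiteTriangulation G p h tri kite outer) (hV : 4 ≤ Nat.card V)
    (hcard : G.edgeSet.ncard + 6 = 3 * Nat.card V + Nat.card K) :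
    crossingNumber G = Nat.card K := by
  have hmem : (straightLineDrawing G hG.regular.injective).crNum ∈
      {n | ∃ D : Drawing G, D.IsGood ∧ D.crNum = n} := ⟨_, hG.isGood, rfl⟩
  refine le_antisymm ((Nat.sInf_le hmem).trans hG.crNum_le) (le_csInf ⟨_, hmem⟩ ?_)
  rintro _ ⟨D, hD, rfl⟩
  have := hD.ncard_edgeSet_add_six_le hV
  lia

theorem kConnected_of_link_of_fan {n k : ℕ} {G : SimpleGraph (Fin n)} (hkn : k ≤ n)
    {link : Fin n → Fin n → List (List (Fin n))} {fan : Fin n → List (List (Fin n))}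
    (hlink : ∀ u v : Fin n, u.val < k → v < u → G.Adj u v ∨
      k ≤ (link u v).length ∧ IsFan G u (link u v) (G.Adj v))
    (hfan : ∀ v : Fin n, k ≤ v.val → k ≤ (fan v).length ∧ IsFan G v (fan v) (· < v)) :
    KConnected G k := by
  refine kConnected_of_fans (B := {v | v.val < k}) ?_
    (fun u hu v _ hvu => (hlink u v hu hvu).elim (isKLinked_of_adj k) fun h => h.2.isKLinked h.1)
    fun v hv => ⟨fan v, hfan v (not_lt.1 hv)⟩
  rw [ncard_eq_toFinset_card', toFinset_ofPred, Fin.card_filter_val_lt, min_eq_right hkn]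

theorem IsKiteTriangulation.exists_isMaximalOnePlane {n k : ℕ} {T : Type*} [Finite T]
    {G : SimpleGraph (Fin n)} [DecidableRel G.Adj] {p : Fin n → ℤ × ℤ} {h : Fin n → ℤ}
    {tri : T → Fin 3 → Fin n} {kite : Fin k → Fin 4 → Fin n} {outer : Fin 3 → Fin n}
    (hG : IsKiteTriangulation G p h tri kite outer) (hn : 4 ≤ n)
    (hdeg : ∑ v, G.degree v + 12 = 6 * n + 2 * k) :
    ∃ D : Drawing G, D.IsMaximalOnePlane ∧ crossingNumber G = k := by
  have hG' := hG.map (f := Int.castRingHom ℝ) Int.cast_strictMono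
  have hcard : G.edgeSet.ncard + 6 = 3 * Nat.card (Fin n) + Nat.card (Fin k) := by
    rw [G.sum_degrees_eq_twice_card_edges, ← ncard_coe_finset, SimpleGraph.coe_edgeFinset] at hdeg
    rw [Nat.card_fin, Nat.card_fin]
    lia
  refine ⟨_, hG'.isMaximalOnePlane, ?_⟩
  rw [hG'.crossingNumber_eq (by rwa [Nat.card_fin]) hcard, Nat.card_fin]

/-- In the kernel this evaluates much faster than the instance based on `Finset.univ`. -/
instance decidableMemRangeFin {α : Type*} [DecidableEq α] {n : ℕ} (f : Fin n → α) (a : α) :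
    Decidable (a ∈ range f) :=
  decidable_of_iff _ (List.mem_ofFn' f a)

/-- The neighbours of each vertex of `graph24`. -/
def neighbors24 (v : Fin 24) : List (Fin 24) :=
  [[1, 2, 3, 4, 5, 6, 7], [0, 2, 3, 8, 12, 16, 18], [0, 1, 3, 4, 7, 8, 10],
    [0, 1, 2, 5, 16, 18, 19], [0, 2, 5, 6, 7, 9, 11], [0, 3, 4, 6, 17, 18, 19],
    [0, 4, 5, 9, 15, 17, 19], [0, 2, 4, 8, 9, 10, 11], [1, 2, 7, 10, 12, 13, 16],
    [4, 6, 7, 11, 14, 15, 17], [2, 7, 8, 11, 12, 13, 14], [4, 7, 9, 10, 13, 14, 15],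
    [1, 8, 10, 13, 16, 20, 23], [8, 10, 11, 12, 14, 20, 23], [9, 10, 11, 13, 15, 20, 21],
    [6, 9, 11, 14, 17, 20, 21], [1, 3, 8, 12, 18, 22, 23], [5, 6, 9, 15, 19, 21, 22],
    [1, 3, 5, 16, 19, 22, 23], [3, 5, 6, 17, 18, 21, 22], [12, 13, 14, 15, 21, 22, 23],
    [14, 15, 17, 19, 20, 22, 23], [16, 17, 18, 19, 20, 21, 23], [12, 13, 16, 18, 20, 21, 22]][v]

/-- The extremal graph on `24` vertices. -/
def graph24 : SimpleGraph (Fin 24) where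
  Adj u v := v ∈ neighbors24 u
  symm := ⟨by decide +kernel⟩
  loopless := ⟨by decide +kernel⟩

instance : DecidableRel graph24.Adj := fun u v =>
  inferInstanceAs (Decidable (v ∈ neighbors24 u))

/-- The position of each vertex of `graph24` in the plane. -/
def position24 (v : Fin 24) : ℤ × ℤ :=
  [(71, 74), (103, 77), (91, 62), (96, 97), (0, 0), (99, 133), (115, 243), (92, 39), (111, 67),
    (256, 13), (120, 55), (150, 45), (120, 75), (132, 68), (148, 64), (177, 70), (115, 84),
    (136, 137), (116, 100), (119, 115), (135, 79), (139, 99), (125, 99), (123, 85)][v]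

/-- Heights over `position24` certifying that the triangulation by the triangles `tri24` and the
halved quadrilaterals `kite24` is regular. -/
def height24 (v : Fin 24) : ℤ :=
  [249, 74, 128, 136, 781, 244, 816, 162, 45, 290, 35, 35, 19, 0, 0, 35, 37, 167, 61, 97, 0, 29,
    40, 20][v]

/-- The bounded faces of the drawing of `graph24` that are incident with no crossing. -/
def tri24 (t : Fin 7) : Fin 3 → Fin 24 :=
  [![2, 8, 1], ![3, 5, 0], ![11, 10, 7], ![15, 17, 21], ![16, 12, 23], ![20, 13, 14],
    ![22, 19, 18]][t]

/-- The quadrilaterals in the drawing of `graph24` whose diagonals cross. -/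
def kite24 (k : Fin 18) : Fin 4 → Fin 24 :=
  [![0, 2, 1, 3], ![2, 0, 4, 7], ![5, 6, 4, 0], ![5, 19, 17, 6], ![7, 4, 9, 11], ![7, 10, 8, 2],
    ![8, 12, 16, 1], ![9, 6, 17, 15], ![12, 8, 10, 13], ![12, 13, 20, 23], ![13, 10, 11, 14],
    ![15, 14, 11, 9], ![15, 21, 20, 14], ![16, 18, 3, 1], ![19, 5, 3, 18], ![21, 17, 19, 22],
    ![22, 23, 20, 21], ![23, 22, 18, 16]][k]

theorem isKiteTriangulation_graph24 :
    IsKiteTriangulation graph24 position24 height24 tri24 kite24 ![4, 9, 6] where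
  regular := ⟨by decide +kernel, by decide +kernel, by decide +kernel, by decide +kernel⟩
  convex := by unfold IsConvexQuad; decide +kernel
  outer_pos := by decide +kernel
  adj_cell := by decide +kernel
  adj_outer := by decide +kernel
  adj_kite := by decide +kernel
  exists_of_adj := by decide +kernel
  kite_eq := by decide +kernel
  face_eq := by decide +kernel

/-- Seven disjoint paths from each vertex `v ≥ 7` of `graph24` to smaller vertices. -/
def fan24 (v : Fin 24) : List (List (Fin 24)) :=
  [[], [], [], [], [], [], [],
   [[2], [0], [4], [8, 1], [9, 6], [10, 12, 16, 3], [11, 15, 17, 5]],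
   [[1], [2], [7], [16, 3], [10, 11, 4], [12, 23, 18, 5], [13, 20, 15, 6]],
   [[7], [4], [6], [17, 5], [14, 13, 8], [11, 10, 2], [15, 20, 12, 1]],
   [[8], [2], [7], [12, 1], [14, 9], [11, 4], [13, 23, 16, 3]],
   [[10], [7], [9], [4], [13, 8], [15, 6], [14, 21, 19, 5]],
   [[8], [10], [1], [13, 11], [16, 3], [23, 18, 5], [20, 14, 9]],
   [[12], [8], [10], [11], [14, 9], [23, 16, 1], [20, 15, 6]],
   [[13], [10], [11], [9], [20, 12], [15, 6], [21, 19, 5]],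
   [[14], [11], [9], [6], [20, 12], [17, 5], [21, 19, 3]],
   [[12], [8], [1], [3], [23, 13], [18, 5], [22, 21, 15]],
   [[15], [9], [5], [6], [22, 16], [21, 14], [19, 3]],
   [[16], [1], [3], [5], [23, 12], [22, 17], [19, 6]],
   [[18], [3], [17], [5], [6], [22, 16], [21, 15]],
   [[12], [13], [14], [15], [23, 16], [22, 18], [21, 19]],
   [[20], [14], [15], [19], [17], [23, 16], [22, 18]],
   [[20], [16], [21], [18], [19], [17], [23, 12]],
   [[12], [13], [20], [16], [22], [21], [18]]][v]

/-- Seven disjoint paths from `u` to neighbours of `v`, for nonadjacent vertices `v < u < 7` of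
`graph24`. -/
def link24 : Fin 24 → Fin 24 → List (List (Fin 24))
  | 4, 1 => [[2], [0], [7, 8], [5, 18], [11, 13, 12], [6, 19, 3], [9, 17, 22, 16]]
  | 4, 3 => [[2], [0], [5], [6, 19], [7, 8, 1], [11, 13, 23, 18], [9, 17, 22, 16]]
  | 5, 1 => [[18], [3], [0], [4, 2], [19, 22, 16], [17, 9, 7, 8], [6, 15, 20, 12]]
  | 5, 2 => [[3], [0], [4], [18, 1], [6, 9, 7], [19, 22, 16, 8], [17, 21, 14, 10]]
  | 6, 1 => [[0], [4, 2], [19, 18], [5, 3], [15, 20, 12], [9, 7, 8], [17, 22, 16]]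
  | 6, 2 => [[0], [4], [9, 7], [19, 3], [15, 14, 10], [5, 18, 1], [17, 22, 16, 8]]
  | 6, 3 => [[0], [19], [5], [4, 2], [17, 22, 18], [15, 20, 12, 16], [9, 7, 8, 1]]
  | _, _ => []

theorem kConnected_graph24 : KConnected graph24 7 :=
  kConnected_of_link_of_fan (by decide) (link := link24) (fan := fan24) (by decide +kernel)
    (by decide +kernel)

/-- The neighbours of each vertex of `graph56`. -/
def neighbors56 (v : Fin 56) : List (Fin 56) :=
  [[1, 2, 3, 4, 5, 6, 7], [0, 2, 3, 8, 10, 13, 14, 18, 19], [0, 1, 3, 5, 7, 8, 9],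
    [0, 1, 2, 4, 6, 10, 11], [0, 3, 6, 10, 11, 15, 16], [0, 2, 6, 7, 12, 26, 28, 30],
    [0, 3, 4, 5, 15, 28, 30, 31], [0, 2, 5, 8, 9, 12, 21], [1, 2, 7, 9, 13, 14, 20],
    [2, 7, 8, 12, 13, 20, 21], [1, 3, 4, 11, 17, 18, 19], [3, 4, 10, 15, 16, 17, 18],
    [5, 7, 9, 21, 26, 27, 28], [1, 8, 9, 14, 20, 23, 25], [1, 8, 13, 19, 22, 23, 25],
    [4, 6, 11, 16, 30, 31, 32], [4, 11, 15, 17, 31, 32, 33], [10, 11, 16, 18, 24, 32, 33, 35],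
    [1, 10, 11, 17, 19, 22, 24], [1, 10, 14, 18, 22, 23, 24], [8, 9, 13, 21, 25, 27, 29, 37],
    [7, 9, 12, 20, 26, 27, 29], [14, 18, 19, 23, 24, 34, 36], [13, 14, 19, 22, 25, 34, 36],
    [17, 18, 19, 22, 33, 34, 35, 39], [13, 14, 20, 23, 29, 36, 37, 38],
    [5, 12, 21, 27, 28, 52, 53], [12, 20, 21, 26, 29, 48, 52, 55], [5, 6, 12, 26, 30, 52, 53],
    [20, 21, 25, 27, 37, 40, 45, 48], [5, 6, 15, 28, 31, 51, 53, 54],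
    [6, 15, 16, 30, 32, 46, 50, 51], [15, 16, 17, 31, 33, 44, 46], [16, 17, 24, 32, 35, 44, 46],
    [22, 23, 24, 35, 36, 38, 39], [17, 24, 33, 34, 39, 43, 44, 47], [22, 23, 25, 34, 37, 38, 39],
    [20, 25, 29, 36, 38, 40, 41], [25, 34, 36, 37, 39, 40, 41], [24, 34, 35, 36, 38, 41, 42, 43],
    [29, 37, 38, 41, 42, 45, 48], [37, 38, 39, 40, 42, 43, 45], [39, 40, 41, 43, 45, 47, 49],
    [35, 39, 41, 42, 44, 47, 49], [32, 33, 35, 43, 46, 47, 50], [29, 40, 41, 42, 48, 49, 55],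
    [31, 32, 33, 44, 47, 50, 51], [35, 42, 43, 44, 46, 49, 50], [27, 29, 40, 45, 49, 52, 55],
    [42, 43, 45, 47, 48, 50, 51, 54, 55], [31, 44, 46, 47, 49, 51, 54],
    [30, 31, 46, 49, 50, 53, 54], [26, 27, 28, 48, 53, 54, 55], [26, 28, 30, 51, 52, 54, 55],
    [30, 49, 50, 51, 52, 53, 55], [27, 45, 48, 49, 52, 53, 54]][v]

/-- The extremal graph on `56` vertices. -/
def graph56 : SimpleGraph (Fin 56) where
  Adj u v := v ∈ neighbors56 u
  symm := ⟨by decide +kernel⟩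
  loopless := ⟨by decide +kernel⟩

instance : DecidableRel graph56.Adj := fun u v =>
  inferInstanceAs (Decidable (v ∈ neighbors56 u))

/-- The position of each vertex of `graph56` in the plane. -/
def position56 (v : Fin 56) : ℤ × ℤ :=
  [(1197, 577), (1175, 525), (1159, 565), (1219, 543), (1250, 552), (1181, 610), (1225, 587),
    (1143, 606), (1115, 565), (1097, 614), (1241, 512), (1279, 519), (1139, 632), (1048, 551),
    (1126, 495), (1271, 564), (1303, 524), (1327, 482), (1269, 476), (1196, 474), (1044, 629),
    (1097, 643), (1222, 406), (1036, 428), (1352, 411), (941, 525), (1156, 678), (1115, 721),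
    (1195, 644), (1009, 763), (1240, 635), (1294, 597), (1346, 538), (1419, 485), (1300, 305),
    (1576, 401), (763, 296), (780, 629), (0, 0), (2048, 102), (966, 992), (922, 1946),
    (1220, 1032), (1568, 509), (1446, 509), (1136, 905), (1341, 581), (1379, 632), (1124, 786),
    (1261, 764), (1310, 659), (1273, 654), (1168, 702), (1209, 673), (1237, 715), (1198, 746)][v]

/-- Heights over `position56` certifying that the triangulation by the triangles `tri56` and the
halved quadrilaterals `kite56` is regular. -/
def height56 (v : Fin 56) : ℤ :=
  [85, 0, 45, 53, 104, 138, 130, 113, 42, 126, 41, 95, 168, 62, 0, 155, 140, 128, 48, 0, 176, 189,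
    78, 101, 149, 183, 304, 422, 241, 593, 275, 270, 257, 342, 421, 684, 842, 894, 4174, 2541,
    1814, 8508, 2333, 1105, 492, 1282, 356, 701, 683, 796, 526, 405, 397, 348, 544, 599][v]

/-- The bounded faces of the drawing of `graph56` that are incident with no crossing. -/
def tri56 (t : Fin 23) : Fin 3 → Fin 56 :=
  [![0, 6, 5], ![1, 2, 8], ![1, 10, 3], ![1, 14, 19], ![7, 5, 12], ![11, 17, 16], ![13, 20, 25],
    ![15, 6, 4], ![18, 24, 17], ![21, 20, 9], ![23, 25, 36], ![26, 52, 27], ![28, 30, 53],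
    ![29, 27, 48], ![30, 31, 51], ![32, 46, 31], ![33, 35, 44], ![34, 24, 22], ![35, 39, 43],
    ![37, 29, 40], ![49, 42, 45], ![49, 50, 47], ![49, 55, 54]][t]

/-- The quadrilaterals in the drawing of `graph56` whose diagonals cross. -/
def kite56 (k : Fin 42) : Fin 4 → Fin 56 :=
  [![1, 3, 0, 2], ![1, 19, 18, 10], ![2, 0, 5, 7], ![3, 4, 6, 0], ![6, 15, 31, 30], ![7, 9, 8, 2],
    ![8, 9, 20, 13], ![8, 13, 14, 1], ![9, 7, 12, 21], ![11, 4, 3, 10], ![13, 25, 23, 14],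
    ![15, 4, 11, 16], ![18, 17, 11, 10], ![19, 22, 24, 18], ![23, 22, 19, 14], ![24, 34, 39, 35],
    ![25, 20, 29, 37], ![26, 12, 5, 28], ![26, 27, 21, 12], ![26, 28, 53, 52], ![28, 5, 6, 30],
    ![29, 20, 21, 27], ![29, 48, 45, 40], ![30, 51, 54, 53], ![31, 46, 50, 51], ![32, 16, 17, 33],
    ![32, 31, 15, 16], ![33, 17, 24, 35], ![33, 44, 46, 32], ![34, 22, 23, 36], ![36, 25, 37, 38],
    ![37, 40, 41, 38], ![38, 39, 34, 36], ![39, 41, 42, 43], ![43, 47, 44, 35], ![44, 47, 50, 46],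
    ![45, 42, 41, 40], ![45, 48, 55, 49], ![48, 27, 52, 55], ![49, 47, 43, 42], ![49, 54, 51, 50],
    ![53, 54, 55, 52]][k]

set_option maxHeartbeats 1000000 in
-- The certificates are large: the checks range over all pairs of a cell and a vertex.
theorem isKiteTriangulation_graph56 :
    IsKiteTriangulation graph56 position56 height56 tri56 kite56 ![38, 39, 41] where
  regular := ⟨by decide +kernel, by decide +kernel, by decide +kernel, by decide +kernel⟩
  convex := by unfold IsConvexQuad; decide +kernel
  outer_pos := by decide +kernel
  adj_cell := by decide +kernel
  adj_outer := by decide +kernel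
  adj_kite := by decide +kernel
  exists_of_adj := by decide +kernel
  kite_eq := by decide +kernel
  face_eq := by decide +kernel

/-- Seven disjoint paths from each vertex `v ≥ 7` of `graph56` to smaller vertices. -/
def fan56 (v : Fin 56) : List (List (Fin 56)) :=
  [[], [], [], [], [], [], [],
   [[2], [0], [5], [8, 1], [12, 28, 6], [9, 13, 23, 19, 10, 3], [21, 26, 53, 30, 15, 4]],
   [[1], [2], [7], [9, 12, 5], [14, 19, 10, 3], [20, 21, 26, 28, 6], [13, 23, 22, 18, 11, 4]],
   [[2], [8], [7], [13, 1], [12, 5], [21, 26, 28, 6], [20, 25, 14, 19, 10, 3]],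
   [[1], [3], [4], [19, 14, 8], [11, 15, 6], [18, 22, 23, 13, 9], [17, 16, 31, 30, 5]],
   [[10], [3], [4], [18, 1], [15, 6], [16, 31, 30, 5], [17, 24, 19, 14, 8]],
   [[9], [7], [5], [28, 6], [27, 20, 8], [21, 29, 25, 14, 1], [26, 53, 30, 15, 4]],
   [[1], [8], [9], [23, 19, 10], [20, 21, 7], [14, 22, 18, 11], [25, 29, 27, 12]],
   [[1], [8], [13], [19, 10], [22, 18, 11], [25, 20, 9], [23, 36, 37, 29, 21, 12]],
   [[4], [11], [6], [30, 5], [16, 17, 10], [32, 33, 24, 19, 1], [31, 51, 53, 26, 12]],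
   [[4], [11], [15], [17, 10], [31, 6], [33, 24, 19, 1], [32, 46, 51, 30, 5]],
   [[10], [11], [16], [18, 1], [32, 15], [24, 19, 14], [33, 46, 31, 6]],
   [[1], [10], [11], [17], [22, 14], [19, 23, 13], [24, 33, 16]],
   [[1], [14], [10], [18], [23, 13], [24, 17], [22, 36, 37, 20, 8]],
   [[8], [13], [9], [25, 14], [21, 7], [27, 12], [37, 36, 22, 19]],
   [[9], [7], [20], [12], [26, 5], [29, 25, 14], [27, 52, 28, 6]],
   [[14], [19], [18], [23, 13], [24, 17], [36, 37, 20], [34, 35, 33, 16]],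
   [[14], [19], [13], [22], [25, 20], [34, 35, 17], [36, 37, 29, 21]],
   [[19], [18], [22], [17], [34, 23], [33, 16], [39, 41, 37, 20]],
   [[14], [13], [23], [20], [36, 22], [29, 21], [38, 39, 24]],
   [[5], [21], [12], [28, 6], [27, 20], [53, 30, 15], [52, 48, 29, 25]],
   [[20], [21], [12], [26], [29, 25], [52, 28, 5], [55, 53, 30, 6]],
   [[5], [6], [12], [26], [30, 15], [52, 27], [53, 51, 31, 16]],
   [[25], [20], [21], [27], [37, 36, 22], [48, 52, 26], [40, 41, 39, 24]],
   [[5], [6], [15], [28], [31, 16], [53, 26], [54, 55, 27]],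
   [[6], [15], [16], [30], [32, 17], [46, 33, 24], [51, 53, 26]],
   [[17], [15], [16], [31], [33, 24], [46, 51, 30], [44, 35, 34, 22]],
   [[17], [24], [16], [32], [46, 31], [35, 34, 22], [44, 50, 54, 30]],
   [[22], [23], [24], [36, 25], [35, 17], [38, 37, 29], [39, 43, 44, 32]],
   [[17], [24], [34], [33], [44, 32], [39, 36, 22], [47, 50, 31]],
   [[22], [23], [25], [34], [37, 20], [39, 24], [38, 40, 29]],
   [[25], [20], [36], [29], [38, 34], [40, 48, 27], [41, 43, 35]],
   [[25], [34], [36], [37], [39, 24], [40, 29], [41, 43, 35]],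
   [[24], [34], [36], [38], [35], [41, 37], [42, 40, 29]],
   [[38], [37], [29], [41, 39], [48, 27], [42, 47, 35], [45, 55, 53, 26]],
   [[38], [37], [39], [40], [45, 29], [43, 35], [42, 49, 54, 30]],
   [[39], [40], [41], [45, 29], [47, 35], [43, 44, 32], [49, 54, 30]],
   [[35], [39], [41], [42], [44, 32], [47, 50, 31], [49, 45, 29]],
   [[32], [33], [35], [43], [46, 31], [47, 42], [50, 54, 30]],
   [[29], [40], [41], [42], [48, 27], [49, 43], [55, 53, 26]],
   [[32], [33], [31], [44], [47, 43], [51, 30], [50, 49, 45]],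
   [[35], [44], [46], [43], [42], [50, 31], [49, 45]],
   [[29], [27], [40], [45], [52, 26], [49, 47], [55, 53, 28]],
   [[45], [48], [47], [43], [42], [54, 30], [51, 31]],
   [[31], [44], [46], [47], [49], [54, 30], [51, 53, 26]],
   [[30], [31], [46], [50], [49], [53, 26], [54, 55, 27]],
   [[26], [28], [27], [48], [53, 30], [54, 51], [55, 49]],
   [[26], [28], [30], [52], [51], [54, 50], [55, 49]],
   [[30], [53], [52], [51], [50], [49], [55, 27]],
   [[27], [45], [48], [53], [52], [54], [49]]][v]

/-- Seven disjoint paths from `u` to neighbours of `v`, for nonadjacent vertices `v < u < 7` of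
`graph56`. -/
def link56 : Fin 56 → Fin 56 → List (List (Fin 56))
  | 4, 1 => [[10], [3], [0], [11, 18], [6, 5, 2], [16, 33, 24, 19], [15, 30, 28, 12, 9, 8]]
  | 4, 2 =>
    [[3], [0], [10, 1], [6, 5], [11, 18, 22, 14, 8], [15, 30, 28, 12, 9],
      [16, 31, 51, 53, 26, 21, 7]]
  | 5, 1 => [[2], [0], [7, 8], [6, 3], [12, 9, 13], [30, 15, 4, 10], [26, 27, 20, 25, 14]]
  | 5, 3 =>
    [[2], [0], [6], [7, 8, 1], [30, 15, 4], [12, 9, 13, 23, 19, 10], [26, 53, 51, 31, 16, 11]]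
  | 5, 4 =>
    [[0], [6], [2, 3], [30, 15], [7, 8, 1, 10], [26, 53, 51, 31, 16], [12, 9, 13, 23, 19, 18, 11]]
  | 6, 1 => [[3], [0], [4, 10], [5, 2], [15, 11, 18], [28, 12, 9, 8], [31, 46, 33, 24, 19]]
  | 6, 2 => [[3], [0], [5], [4, 10, 1], [28, 12, 9], [30, 53, 26, 21, 7], [15, 11, 18, 22, 14, 8]]
  | _, _ => []

theorem kConnected_graph56 : KConnected graph56 7 :=
  kConnected_of_link_of_fan (by decide) (link := link56) (fan := fan56) (by decide +kernel)
    (by decide +kernel)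

/-- For each `n ∈ {24, 56}`, there is a 7-connected maximal 1-plane graph
on `n` vertices with crossing number `3n/4`. -/
theorem stmt_18 :
    ∀ n ∈ ({24, 56} : Set ℕ), ∃ (G : SimpleGraph (Fin n)) (D : Drawing G),
      D.IsMaximalOnePlane ∧ KConnected G 7 ∧
      4 * crossingNumber G = 3 * n := by
  rintro n (rfl | rfl)
  · obtain ⟨D, hD, hcr⟩ :=
      isKiteTriangulation_graph24.exists_isMaximalOnePlane (by decide) (by decide +kernel)
    exact ⟨graph24, D, hD, kConnected_graph24, by rw [hcr]⟩
  · obtain ⟨D, hD, hcr⟩ :=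
      isKiteTriangulation_graph56.exists_isMaximalOnePlane (by decide) (by decide +kernel)
    exact ⟨graph56, D, hD, kConnected_graph56, by rw [hcr]⟩
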